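/- arXiv:1806.11286 — 7 statements merged into one kernel-verified Lean document; each statement's English description precedes it below -/
import Mathlib

section
/- Let n ≥ 2 be an integer and let k be an even natural number. Let P : ℍⁿ → ℂ be a complex-valued polynomial function in the 4n real coordinates of ℍⁿ ≅ ℝ^{4n} which is harmonic (its Laplacian on ℝ^{4n} vanishes), homogeneous of degree k, invariant under the left action of 1 × Sp(n−1) (P(Mx) = P(x) for all M ∈ 1 × Sp(n−1) and x ∈ ℍⁿ) and invariant under right multiplication by unit quaternions (P(xq) = P(x) for all q ∈ ℍ with |q| = 1). Define F : [0, π/2] → ℂ by F(θ) = P(x(θ)). Then F is smooth on (0, π/2) and for every θ ∈ (0, π/2): F''(θ) + ( 6/tan(2θ) + (4n−8)/tan(θ) ) · F'(θ) + k(k + 4n − 2) · F(θ) = 0. -/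
noncomputable section
open scoped Quaternion
open Matrix

/-- Second derivative of `f` along direction `d` at the point `x`. -/
def qdir2 {n : ℕ} (f : (Fin n → ℍ[ℝ]) → ℂ) (d x : Fin n → ℍ[ℝ]) : ℂ :=
  iteratedDeriv 2 (fun t : ℝ => f (x + t • d)) 0

/-- The Laplacian of `f : ℍⁿ → ℂ` viewed as a function on `ℝ^{4n}`: the sum of
the `4n` second partial derivatives along the real coordinate directions. -/
def qLap {n : ℕ} (f : (Fin n → ℍ[ℝ]) → ℂ) (x : Fin n → ℍ[ℝ]) : ℂ :=
  ∑ j : Fin n,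
    (qdir2 f (Pi.single j 1) x + qdir2 f (Pi.single j ⟨0,1,0,0⟩) x +
      qdir2 f (Pi.single j ⟨0,0,1,0⟩) x + qdir2 f (Pi.single j ⟨0,0,0,1⟩) x)

/-- `P` is a complex-valued polynomial function of the `4n` real coordinates of `ℍⁿ`. -/
def IsPolyFun {n : ℕ} (P : (Fin n → ℍ[ℝ]) → ℂ) : Prop :=
  ∃ p : MvPolynomial (Fin n × Fin 4) ℂ,
    ∀ x, P x = MvPolynomial.eval
      (fun jl => ((![ (x jl.1).re, (x jl.1).imI, (x jl.1).imJ, (x jl.1).imK ] jl.2 : ℝ) : ℂ)) p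

/-- `x(θ) = (cos θ, 0, …, 0, sin θ) ∈ ℍⁿ`. -/
def xtheta (n : ℕ) (θ : ℝ) : Fin n → ℍ[ℝ] :=
  fun i => if (i : ℕ) = 0 then ((Real.cos θ : ℝ) : ℍ[ℝ])
    else if (i : ℕ) = n - 1 then ((Real.sin θ : ℝ) : ℍ[ℝ]) else 0

theorem curve_hasDeriv (g : MvPolynomial (Fin 2) ℂ) (u v : ℝ → ℝ) (u' v' t : ℝ)
    (hu : HasDerivAt u u' t) (hv : HasDerivAt v v' t) :
    HasDerivAt (fun t => MvPolynomial.eval ![(u t : ℂ), (v t : ℂ)] g)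
      (MvPolynomial.eval ![(u t : ℂ), (v t : ℂ)] (MvPolynomial.pderiv 0 g) * u'
        + MvPolynomial.eval ![(u t : ℂ), (v t : ℂ)] (MvPolynomial.pderiv 1 g) * v') t := by
  induction g using MvPolynomial.induction_on with
  | C a => simpa using hasDerivAt_const t a
  | add p q hp hq =>
    simp only [map_add]
    refine (hp.add hq).congr_deriv ?_
    ring
  | mul_X p i hp =>
    have hX : HasDerivAt (fun t => ![(u t : ℂ), (v t : ℂ)] i) (![(u' : ℂ), (v' : ℂ)] i) t := by
      fin_cases i
      · simpa using hu.ofReal_comp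
      · simpa using hv.ofReal_comp
    simp only [map_mul, MvPolynomial.eval_X]
    refine (hp.mul hX).congr_deriv ?_
    simp only [Derivation.leibniz, smul_eq_mul, map_add, map_mul, MvPolynomial.eval_X]
    fin_cases i <;> simp [MvPolynomial.pderiv_X] <;> ring

theorem curve_second (g : MvPolynomial (Fin 2) ℂ) (u v u1 v1 : ℝ → ℝ) (u2 v2 t : ℝ)
    (hu : ∀ t, HasDerivAt u (u1 t) t) (hv : ∀ t, HasDerivAt v (v1 t) t)
    (hu1 : HasDerivAt u1 u2 t) (hv1 : HasDerivAt v1 v2 t) :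
    deriv (deriv (fun t => MvPolynomial.eval ![(u t : ℂ), (v t : ℂ)] g)) t =
      MvPolynomial.eval ![(u t : ℂ), (v t : ℂ)] (MvPolynomial.pderiv 0 (MvPolynomial.pderiv 0 g))
        * u1 t ^ 2
      + 2 * MvPolynomial.eval ![(u t : ℂ), (v t : ℂ)]
          (MvPolynomial.pderiv 0 (MvPolynomial.pderiv 1 g)) * u1 t * v1 t
      + MvPolynomial.eval ![(u t : ℂ), (v t : ℂ)] (MvPolynomial.pderiv 1 (MvPolynomial.pderiv 1 g))
        * v1 t ^ 2
      + MvPolynomial.eval ![(u t : ℂ), (v t : ℂ)] (MvPolynomial.pderiv 0 g) * u2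
      + MvPolynomial.eval ![(u t : ℂ), (v t : ℂ)] (MvPolynomial.pderiv 1 g) * v2 := by
  have h1 : deriv (fun t => MvPolynomial.eval ![(u t : ℂ), (v t : ℂ)] g) = fun t =>
      MvPolynomial.eval ![(u t : ℂ), (v t : ℂ)] (MvPolynomial.pderiv 0 g) * (u1 t : ℂ)
        + MvPolynomial.eval ![(u t : ℂ), (v t : ℂ)] (MvPolynomial.pderiv 1 g) * (v1 t : ℂ) := by
    funext s
    exact (curve_hasDeriv g u v _ _ s (hu s) (hv s)).deriv
  have hc : MvPolynomial.pderiv 1 (MvPolynomial.pderiv 0 g) =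
      MvPolynomial.pderiv 0 (MvPolynomial.pderiv 1 g) := by
    have h0 : ⁅MvPolynomial.pderiv (R := ℂ) (1 : Fin 2), MvPolynomial.pderiv (R := ℂ) (0 : Fin 2)⁆ = 0 := by
      apply MvPolynomial.derivation_ext
      intro i
      rw [Derivation.commutator_apply]
      fin_cases i <;> simp [MvPolynomial.pderiv_X]
    have h1 := congrArg (fun D => D g) h0
    simp only [Derivation.commutator_apply] at h1
    exact sub_eq_zero.mp h1
  rw [h1]
  have h2 := (((curve_hasDeriv (MvPolynomial.pderiv 0 g) u v _ _ t (hu t) (hv t)).mul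
    hu1.ofReal_comp).add ((curve_hasDeriv (MvPolynomial.pderiv 1 g) u v _ _ t (hu t) (hv t)).mul
    hv1.ofReal_comp)).deriv
  rw [hc] at h2
  refine Eq.trans h2 ?_
  ring

theorem curve_smooth (g : MvPolynomial (Fin 2) ℂ) : ContDiff ℝ (⊤ : ℕ∞) (fun θ : ℝ =>
    MvPolynomial.eval ![((Real.cos θ : ℝ) : ℂ), ((Real.sin θ : ℝ) : ℂ)] g) := by
  induction g using MvPolynomial.induction_on with
  | C a => simpa using contDiff_const
  | add p q hp hq => simpa only [map_add] using hp.add hq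
  | mul_X p i hp =>
    simp only [map_mul, MvPolynomial.eval_X]
    refine hp.mul ?_
    fin_cases i
    · exact Complex.ofRealCLM.contDiff.comp Real.contDiff_cos
    · exact Complex.ofRealCLM.contDiff.comp Real.contDiff_sin

theorem sqrt_curve (b : ℝ) (hb : 0 < b) :
    (∀ t : ℝ, HasDerivAt (fun t : ℝ => √(b ^ 2 + t ^ 2)) (t / √(b ^ 2 + t ^ 2)) t) ∧
    HasDerivAt (fun t : ℝ => t / √(b ^ 2 + t ^ 2)) (1 / b) 0 := by
  have h1 : ∀ t : ℝ, HasDerivAt (fun t : ℝ => √(b ^ 2 + t ^ 2)) (t / √(b ^ 2 + t ^ 2)) t := by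
    intro t
    have h : HasDerivAt (fun t : ℝ => b ^ 2 + t ^ 2) (2 * t) t := by
      simpa using ((hasDerivAt_id t).pow 2).const_add (b ^ 2)
    have := h.sqrt (by positivity)
    convert this using 1
    field_simp
  refine ⟨h1, ?_⟩
  have := (hasDerivAt_id (0 : ℝ)).div (h1 0) (by positivity)
  refine this.congr_deriv ?_
  simp [Real.sqrt_sq hb.le]
  field_simp

/-- the base point -/
def bpt {n : ℕ} (o l : Fin n) (a b : ℍ[ℝ]) : Fin n → ℍ[ℝ] := Pi.single o a + Pi.single l b

theorem qself (q : ℍ[ℝ]) : star q * q = ((‖q‖ ^ 2 : ℝ) : ℍ[ℝ]) := by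
  rw [Quaternion.star_mul_self, Quaternion.normSq_eq_norm_mul_self, sq]

theorem diag_inv {n : ℕ} (o l : Fin n) (hol : o ≠ l) (P : (Fin n → ℍ[ℝ]) → ℂ)
    (hleft : ∀ M : Matrix (Fin n) (Fin n) ℍ[ℝ], Mᴴ * M = 1 →
      (∀ i, M i o = if i = o then 1 else 0) → (∀ j, M o j = if j = o then 1 else 0) →
      ∀ x, P (M.mulVec x) = P x) (q : ℍ[ℝ]) (hq : ‖q‖ = 1) (a b : ℍ[ℝ]) :
    P (bpt o l a (q * b)) = P (bpt o l a b) := by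
  have hM := hleft (Matrix.diagonal (fun i => if i = l then q else 1)) ?_ ?_ ?_ (bpt o l a b)
  · rw [← hM]
    congr 1
    funext i
    simp only [Matrix.mulVec_diagonal, bpt, Pi.add_apply, Pi.single_apply]
    by_cases h1 : i = l
    · simp [h1, hol.symm]
    · simp [h1]
  · rw [Matrix.diagonal_conjTranspose, Matrix.diagonal_mul_diagonal, ← Matrix.diagonal_one]
    congr 1
    funext i
    by_cases h1 : i = l
    · simp only [Pi.star_apply, h1, if_true]
      rw [qself, hq]; simp
    · simp [h1]
  · intro i
    by_cases h1 : i = o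
    · simp [h1, hol]
    · simp [h1]
  · intro i
    by_cases h1 : i = o
    · simp [h1, hol]
    · simp [Ne.symm h1, h1]

theorem last_inv {n : ℕ} (o l : Fin n) (hol : o ≠ l) (P : (Fin n → ℍ[ℝ]) → ℂ)
    (hleft : ∀ M : Matrix (Fin n) (Fin n) ℍ[ℝ], Mᴴ * M = 1 →
      (∀ i, M i o = if i = o then 1 else 0) → (∀ j, M o j = if j = o then 1 else 0) →
      ∀ x, P (M.mulVec x) = P x) (a b : ℍ[ℝ]) (hb : b ≠ 0) :
    P (bpt o l a b) = P (bpt o l a ((‖b‖ : ℝ) : ℍ[ℝ])) := by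
  have hn : ‖b‖ ≠ 0 := norm_ne_zero_iff.mpr hb
  rw [← diag_inv o l hol P hleft (‖b‖⁻¹ • star b) (by
    rw [norm_smul]; simp [hn]) a b]
  congr 2
  rw [smul_mul_assoc, qself, Quaternion.smul_coe]
  congr 1
  field_simp

theorem first_inv {n : ℕ} (o l : Fin n) (hol : o ≠ l) (P : (Fin n → ℍ[ℝ]) → ℂ)
    (hleft : ∀ M : Matrix (Fin n) (Fin n) ℍ[ℝ], Mᴴ * M = 1 →
      (∀ i, M i o = if i = o then 1 else 0) → (∀ j, M o j = if j = o then 1 else 0) →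
      ∀ x, P (M.mulVec x) = P x)
    (hright : ∀ q : ℍ[ℝ], ‖q‖ = 1 → ∀ x, P (fun i => x i * q) = P x)
    (a : ℍ[ℝ]) (b : ℝ) (ha : a ≠ 0) (hb : 0 < b) :
    P (bpt o l a b) = P (bpt o l ((‖a‖ : ℝ) : ℍ[ℝ]) b) := by
  have hn : ‖a‖ ≠ 0 := norm_ne_zero_iff.mpr ha
  have hq : ‖(‖a‖⁻¹ • star a : ℍ[ℝ])‖ = 1 := by
    rw [norm_smul]; simp [hn]
  rw [← hright _ hq]
  have e : (fun i => bpt o l a b i * (‖a‖⁻¹ • star a : ℍ[ℝ])) =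
      bpt o l ((‖a‖ : ℝ) : ℍ[ℝ]) ((b : ℍ[ℝ]) * (‖a‖⁻¹ • star a : ℍ[ℝ])) := by
    funext i
    simp only [bpt, Pi.add_apply, Pi.single_apply, add_mul, ite_mul, zero_mul]
    congr 2
    rw [mul_smul_comm, Quaternion.self_mul_star, Quaternion.normSq_eq_norm_mul_self,
      Quaternion.smul_coe]
    congr 1
    field_simp
  have hb' : (b : ℍ[ℝ]) ≠ 0 := by
    intro h
    have := congrArg (fun z : ℍ[ℝ] => z.re) h
    simp at this
    exact hb.ne' this
  have hq0 : (‖a‖⁻¹ • star a : ℍ[ℝ]) ≠ 0 := by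
    rw [← norm_ne_zero_iff, hq]; norm_num
  rw [e, last_inv o l hol P hleft _ _ (mul_ne_zero hb' hq0), norm_mul, hq]
  simp [abs_of_pos hb]

theorem mid_inv {n : ℕ} (o l j : Fin n) (hol : o ≠ l) (hjo : j ≠ o) (hjl : j ≠ l)
    (P : (Fin n → ℍ[ℝ]) → ℂ)
    (hleft : ∀ M : Matrix (Fin n) (Fin n) ℍ[ℝ], Mᴴ * M = 1 →
      (∀ i, M i o = if i = o then 1 else 0) → (∀ j, M o j = if j = o then 1 else 0) →
      ∀ x, P (M.mulVec x) = P x) (a w : ℍ[ℝ]) (b s : ℝ)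
    (hs : s ^ 2 = b ^ 2 + ‖w‖ ^ 2) (hb : 0 < b) (hs0 : 0 < s) :
    P (bpt o l a b + Pi.single j w) = P (bpt o l a s) := by
  by_cases hw : w = 0
  · have : s = b := by
      rw [hw] at hs
      simp at hs
      nlinarith
    rw [hw, this]; simp
  have hwn : 0 < ‖w‖ := norm_pos_iff.mpr hw
  set v : Fin n → ℍ[ℝ] := Pi.single j w + Pi.single l ((b - s : ℝ) : ℍ[ℝ]) with hv
  set N : ℝ := ‖w‖ ^ 2 + (b - s) ^ 2 with hN
  have hN0 : 0 < N := by positivity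
  have hvo : v o = 0 := by simp [hv, hjo.symm, hol]
  have hvv : star v ⬝ᵥ v = ((N : ℝ) : ℍ[ℝ]) := by
    have : star v = Pi.single j (star w) + Pi.single l ((b - s : ℝ) : ℍ[ℝ]) := by
      funext i
      simp only [hv, Pi.star_apply, Pi.add_apply, Pi.single_apply, star_add]
      congr 1 <;> split_ifs <;> simp
    rw [this, add_dotProduct, single_dotProduct, single_dotProduct]
    simp only [hv, Pi.add_apply, Pi.single_eq_same, Pi.single_eq_of_ne hjl,
      Pi.single_eq_of_ne hjl.symm, add_zero, zero_add]
    rw [qself, ← Quaternion.coe_mul, ← Quaternion.coe_add, hN]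
    congr 1; ring
  have hvx : star v ⬝ᵥ (bpt o l a b + Pi.single j w) = ((N / 2 : ℝ) : ℍ[ℝ]) := by
    have : star v = Pi.single j (star w) + Pi.single l ((b - s : ℝ) : ℍ[ℝ]) := by
      funext i
      simp only [hv, Pi.star_apply, Pi.add_apply, Pi.single_apply, star_add]
      congr 1 <;> split_ifs <;> simp
    rw [this, add_dotProduct, single_dotProduct, single_dotProduct]
    simp only [bpt, Pi.add_apply, Pi.single_eq_same, Pi.single_eq_of_ne hjl, Pi.single_eq_of_ne hjo,
      Pi.single_eq_of_ne hjl.symm, Pi.single_eq_of_ne hol.symm, add_zero, zero_add]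
    rw [qself, ← Quaternion.coe_mul, ← Quaternion.coe_add, hN]
    congr 1; nlinarith
  set V : Matrix (Fin n) (Fin n) ℍ[ℝ] := vecMulVec v (star v) with hV
  have hVH : Vᴴ = V := by
    rw [hV, conjTranspose_vecMulVec, star_star]
  have hVV : V * V = N • V := by
    rw [hV, vecMulVec_mul_vecMulVec, hvv]
    refine Matrix.ext fun i j => ?_
    simp only [vecMulVec_apply, Pi.smul_apply, smul_eq_mul, Matrix.smul_apply]
    rw [Quaternion.coe_mul_eq_smul, mul_smul_comm]
  have hsH : ((2 / N) • V)ᴴ = (2 / N) • V := by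
    refine Matrix.ext fun i j => ?_
    have := congrFun (congrFun hVH i) j
    rw [conjTranspose_apply] at this ⊢
    rw [Matrix.smul_apply, Matrix.smul_apply, Quaternion.star_smul, this]
  have hM := hleft (1 - (2 / N) • V) ?_ ?_ ?_ (bpt o l a b + Pi.single j w)
  · rw [← hM]
    congr 1
    rw [sub_mulVec, one_mulVec, smul_mulVec, hV, vecMulVec_mulVec, hvx]
    have h2 : ∀ z : ℍ[ℝ], (2 / N) • (z * ((N / 2 : ℝ) : ℍ[ℝ])) = z := by
      intro z
      rw [Quaternion.mul_coe_eq_smul, smul_smul]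
      have : 2 / N * (N / 2) = 1 := by field_simp
      rw [this, one_smul]
    funext i
    simp only [Pi.sub_apply, Pi.smul_apply, MulOpposite.smul_eq_mul_unop, MulOpposite.unop_op, h2]
    simp only [bpt, hv, Pi.add_apply, Pi.single_apply]
    split_ifs <;> simp <;> abel
  · rw [conjTranspose_sub, conjTranspose_one, hsH]
    rw [sub_mul, mul_sub, mul_sub, one_mul, one_mul, mul_one, smul_mul_smul_comm, hVV, smul_smul]
    have : 2 / N * (2 / N) * N = 2 / N + 2 / N := by field_simp; norm_num
    rw [this, add_smul]
    abel
  · intro i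
    simp [hV, vecMulVec_apply, hvo, one_apply]
  · intro i
    simp [hV, vecMulVec_apply, hvo, one_apply, eq_comm]

theorem qnorm_im (a t : ℝ) (u : ℍ[ℝ]) (hu0 : u.re = 0) (hu : ‖u‖ = 1) :
    ‖(a : ℍ[ℝ]) + t • u‖ = √(a ^ 2 + t ^ 2) := by
  have h1 : u.imI ^ 2 + u.imJ ^ 2 + u.imK ^ 2 = 1 := by
    have h := Quaternion.normSq_eq_norm_mul_self u
    rw [Quaternion.normSq_def', hu, hu0] at h
    linarith
  have h := Quaternion.normSq_eq_norm_mul_self ((a : ℍ[ℝ]) + t • u)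
  rw [Quaternion.normSq_def'] at h
  simp [hu0] at h
  symm
  rw [Real.sqrt_eq_iff_mul_self_eq (by positivity) (norm_nonneg _), ← h]
  linear_combination -(t ^ 2) * h1

theorem unit_norms : norm (E := ℍ[ℝ]) ⟨0,1,0,0⟩ = 1 ∧ norm (E := ℍ[ℝ]) ⟨0,0,1,0⟩ = 1 ∧
    norm (E := ℍ[ℝ]) ⟨0,0,0,1⟩ = 1 := by
  have h : ∀ q : ℍ[ℝ], q.re ^ 2 + q.imI ^ 2 + q.imJ ^ 2 + q.imK ^ 2 = 1 → ‖q‖ = 1 := by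
    intro q hq
    rw [← Quaternion.normSq_def', Quaternion.normSq_eq_norm_mul_self] at hq
    nlinarith [norm_nonneg q]
  refine ⟨h _ ?_, h _ ?_, h _ ?_⟩
  · change (0 : ℝ) ^ 2 + 1 ^ 2 + 0 ^ 2 + 0 ^ 2 = 1
    norm_num
  · change (0 : ℝ) ^ 2 + 0 ^ 2 + 1 ^ 2 + 0 ^ 2 = 1
    norm_num
  · change (0 : ℝ) ^ 2 + 0 ^ 2 + 0 ^ 2 + 1 ^ 2 = 1
    norm_num

theorem exists_red {n : ℕ} (o l : Fin n) (hol : o ≠ l) (P : (Fin n → ℍ[ℝ]) → ℂ)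
    (hpoly : IsPolyFun P) : ∃ g : MvPolynomial (Fin 2) ℂ, ∀ a b : ℝ,
      P (bpt o l (a : ℍ[ℝ]) (b : ℍ[ℝ])) = MvPolynomial.eval ![(a : ℂ), (b : ℂ)] g := by
  obtain ⟨p, hp⟩ := hpoly
  refine ⟨MvPolynomial.bind₁ (fun jl : Fin n × Fin 4 => if jl.2 = 0 then
    (if jl.1 = o then MvPolynomial.X 0 else if jl.1 = l then MvPolynomial.X 1 else 0) else 0) p, ?_⟩
  intro a b
  rw [hp]
  have := MvPolynomial.eval₂Hom_bind₁ (RingHom.id ℂ) (![(a : ℂ), (b : ℂ)])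
    (fun jl : Fin n × Fin 4 => if jl.2 = 0 then
    (if jl.1 = o then MvPolynomial.X (R := ℂ) (0 : Fin 2)
      else if jl.1 = l then MvPolynomial.X 1 else 0) else 0) p
  refine Eq.trans ?_ this.symm
  change MvPolynomial.eval _ p = MvPolynomial.eval _ p
  congr 2
  funext ⟨j, m⟩
  by_cases h1 : j = o
  · subst h1
    fin_cases m <;> simp [bpt, hol]
  · by_cases h2 : j = l
    · subst h2
      fin_cases m <;> simp [bpt, hol.symm]
    · fin_cases m <;> simp [bpt, h1, h2]

theorem lap_red {n : ℕ} (o l : Fin n) (hol : o ≠ l) (P : (Fin n → ℍ[ℝ]) → ℂ)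
    (hleft : ∀ M : Matrix (Fin n) (Fin n) ℍ[ℝ], Mᴴ * M = 1 →
      (∀ i, M i o = if i = o then 1 else 0) → (∀ j, M o j = if j = o then 1 else 0) →
      ∀ x, P (M.mulVec x) = P x)
    (hright : ∀ q : ℍ[ℝ], ‖q‖ = 1 → ∀ x, P (fun i => x i * q) = P x)
    (g : MvPolynomial (Fin 2) ℂ) (hg : ∀ a b : ℝ,
      P (bpt o l (a : ℍ[ℝ]) (b : ℍ[ℝ])) = MvPolynomial.eval ![(a : ℂ), (b : ℂ)] g)
    (a b : ℝ) (ha : 0 < a) (hb : 0 < b) :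
    qLap P (bpt o l (a : ℍ[ℝ]) (b : ℍ[ℝ])) =
      MvPolynomial.eval ![(a : ℂ), (b : ℂ)] (MvPolynomial.pderiv 0 (MvPolynomial.pderiv 0 g)) +
      MvPolynomial.eval ![(a : ℂ), (b : ℂ)] (MvPolynomial.pderiv 1 (MvPolynomial.pderiv 1 g)) +
      3 * (MvPolynomial.eval ![(a : ℂ), (b : ℂ)] (MvPolynomial.pderiv 0 g) * (1 / a)) +
      (4 * (n : ℂ) - 5) *
        (MvPolynomial.eval ![(a : ℂ), (b : ℂ)] (MvPolynomial.pderiv 1 g) * (1 / b)) := by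
  have q2 : ∀ d x, qdir2 P d x = deriv (deriv (fun t : ℝ => P (x + t • d))) 0 := by
    intro d x
    simp [qdir2, iteratedDeriv_succ, iteratedDeriv_zero]
  have qne : ∀ (c t : ℝ) (u : ℍ[ℝ]), 0 < c → u.re = 0 → (c : ℍ[ℝ]) + t • u ≠ 0 := by
    intro c t u hc hu h
    have := congrArg (fun z : ℍ[ℝ] => z.re) h
    simp [hu] at this
    exact hc.ne' this
  have po : ∀ (t : ℝ) (u : ℍ[ℝ]), bpt o l (a : ℍ[ℝ]) (b : ℍ[ℝ]) + t • (Pi.single o u : Fin n → ℍ[ℝ]) =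
      bpt o l ((a : ℍ[ℝ]) + t • u) b := by
    intro t u
    rw [← Pi.single_smul, bpt, bpt, Pi.single_add]
    abel
  have pl : ∀ (t : ℝ) (u : ℍ[ℝ]), bpt o l (a : ℍ[ℝ]) (b : ℍ[ℝ]) + t • (Pi.single l u : Fin n → ℍ[ℝ]) =
      bpt o l (a : ℍ[ℝ]) ((b : ℍ[ℝ]) + t • u) := by
    intro t u
    rw [← Pi.single_smul, bpt, bpt, Pi.single_add]
    abel
  have sm1 : ∀ t : ℝ, t • (1 : ℍ[ℝ]) = (t : ℍ[ℝ]) := by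
    intro t
    rw [← Quaternion.coe_one, Quaternion.smul_coe, mul_one]
  have lin : ∀ c t : ℝ, HasDerivAt (fun t : ℝ => c + t) 1 t := fun c t =>
    (hasDerivAt_id t).const_add c
  have sa := sqrt_curve a ha
  have sb := sqrt_curve b hb
  have d1 : qdir2 P (Pi.single o 1) (bpt o l (a : ℍ[ℝ]) (b : ℍ[ℝ])) =
      MvPolynomial.eval ![(a : ℂ), (b : ℂ)] (MvPolynomial.pderiv 0 (MvPolynomial.pderiv 0 g)) := by
    rw [q2]
    simp only [po, sm1, ← Quaternion.coe_add, hg]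
    rw [curve_second g (fun t => a + t) (fun _ => b) (fun _ => 1) (fun _ => 0) 0 0 0 (lin a)
      (fun t => hasDerivAt_const t b) (hasDerivAt_const _ _) (hasDerivAt_const _ _)]
    simp
  have d2 : qdir2 P (Pi.single l 1) (bpt o l (a : ℍ[ℝ]) (b : ℍ[ℝ])) =
      MvPolynomial.eval ![(a : ℂ), (b : ℂ)] (MvPolynomial.pderiv 1 (MvPolynomial.pderiv 1 g)) := by
    rw [q2]
    simp only [pl, sm1, ← Quaternion.coe_add, hg]
    rw [curve_second g (fun _ => a) (fun t => b + t) (fun _ => 0) (fun _ => 1) 0 0 0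
      (fun t => hasDerivAt_const t a) (lin b) (hasDerivAt_const _ _) (hasDerivAt_const _ _)]
    simp
  have d3 : ∀ u : ℍ[ℝ], u.re = 0 → ‖u‖ = 1 →
      qdir2 P (Pi.single o u) (bpt o l (a : ℍ[ℝ]) (b : ℍ[ℝ])) =
      MvPolynomial.eval ![(a : ℂ), (b : ℂ)] (MvPolynomial.pderiv 0 g) * (1 / a) := by
    intro u hu0 hu
    have e : ∀ t : ℝ, P (bpt o l (a : ℍ[ℝ]) (b : ℍ[ℝ]) + t • (Pi.single o u : Fin n → ℍ[ℝ])) =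
        MvPolynomial.eval ![((√(a ^ 2 + t ^ 2) : ℝ) : ℂ), (b : ℂ)] g := by
      intro t
      rw [po, first_inv o l hol P hleft hright _ b (qne a t u ha hu0) hb, qnorm_im a t u hu0 hu, hg]
    rw [q2]
    simp only [e]
    rw [curve_second g (fun t => √(a ^ 2 + t ^ 2)) (fun _ => b) _ (fun _ => 0) _ 0 0 sa.1
      (fun t => hasDerivAt_const t b) sa.2 (hasDerivAt_const _ _)]
    simp [Real.sqrt_sq ha.le]
  have d4 : ∀ u : ℍ[ℝ], u.re = 0 → ‖u‖ = 1 →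
      qdir2 P (Pi.single l u) (bpt o l (a : ℍ[ℝ]) (b : ℍ[ℝ])) =
      MvPolynomial.eval ![(a : ℂ), (b : ℂ)] (MvPolynomial.pderiv 1 g) * (1 / b) := by
    intro u hu0 hu
    have e : ∀ t : ℝ, P (bpt o l (a : ℍ[ℝ]) (b : ℍ[ℝ]) + t • (Pi.single l u : Fin n → ℍ[ℝ])) =
        MvPolynomial.eval ![(a : ℂ), ((√(b ^ 2 + t ^ 2) : ℝ) : ℂ)] g := by
      intro t
      rw [pl, last_inv o l hol P hleft _ _ (qne b t u hb hu0), qnorm_im b t u hu0 hu, hg]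
    rw [q2]
    simp only [e]
    rw [curve_second g (fun _ => a) (fun t => √(b ^ 2 + t ^ 2)) (fun _ => 0) _ 0 _ 0
      (fun t => hasDerivAt_const t a) sb.1 (hasDerivAt_const _ _) sb.2]
    simp [Real.sqrt_sq hb.le]
  have d5 : ∀ j, j ≠ o → j ≠ l → ∀ u : ℍ[ℝ], ‖u‖ = 1 →
      qdir2 P (Pi.single j u) (bpt o l (a : ℍ[ℝ]) (b : ℍ[ℝ])) =
      MvPolynomial.eval ![(a : ℂ), (b : ℂ)] (MvPolynomial.pderiv 1 g) * (1 / b) := by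
    intro j hjo hjl u hu
    have e : ∀ t : ℝ, P (bpt o l (a : ℍ[ℝ]) (b : ℍ[ℝ]) + t • (Pi.single j u : Fin n → ℍ[ℝ])) =
        MvPolynomial.eval ![(a : ℂ), ((√(b ^ 2 + t ^ 2) : ℝ) : ℂ)] g := by
      intro t
      rw [← Pi.single_smul, mid_inv o l j hol hjo hjl P hleft a (t • u) b (√(b ^ 2 + t ^ 2)) ?_ hb
        (by positivity), hg]
      rw [Real.sq_sqrt (by positivity), norm_smul, hu]
      simp
    rw [q2]
    simp only [e]
    rw [curve_second g (fun _ => a) (fun t => √(b ^ 2 + t ^ 2)) (fun _ => 0) _ 0 _ 0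
      (fun t => hasDerivAt_const t a) sb.1 (hasDerivAt_const _ _) sb.2]
    simp [Real.sqrt_sq hb.le]
  obtain ⟨n1, n2, n3⟩ := unit_norms
  set Gaa := MvPolynomial.eval ![(a : ℂ), (b : ℂ)] (MvPolynomial.pderiv 0 (MvPolynomial.pderiv 0 g))
  set Gbb := MvPolynomial.eval ![(a : ℂ), (b : ℂ)] (MvPolynomial.pderiv 1 (MvPolynomial.pderiv 1 g))
  set Ga := MvPolynomial.eval ![(a : ℂ), (b : ℂ)] (MvPolynomial.pderiv 0 g) * (1 / a)
  set Gb := MvPolynomial.eval ![(a : ℂ), (b : ℂ)] (MvPolynomial.pderiv 1 g) * (1 / b)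
  have hsum : qLap P (bpt o l (a : ℍ[ℝ]) (b : ℍ[ℝ])) = ∑ j : Fin n, (4 * Gb +
      (if j = o then Gaa + 3 * Ga - 4 * Gb else 0) + (if j = l then Gbb - Gb else 0)) := by
    unfold qLap
    refine Finset.sum_congr rfl fun j _ => ?_
    by_cases h1 : j = o
    · subst h1
      rw [d1, d3 _ rfl n1, d3 _ rfl n2, d3 _ rfl n3, if_pos rfl, if_neg hol]
      ring
    · by_cases h2 : j = l
      · subst h2
        rw [d2, d4 _ rfl n1, d4 _ rfl n2, d4 _ rfl n3, if_pos rfl, if_neg h1]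
        ring
      · rw [d5 j h1 h2 _ norm_one, d5 j h1 h2 _ n1, d5 j h1 h2 _ n2, d5 j h1 h2 _ n3,
          if_neg h1, if_neg h2]
        ring
  rw [hsum, Finset.sum_add_distrib, Finset.sum_add_distrib]
  simp
  ring

/-- the restriction of a harmonic, homogeneous, bi-invariant polynomial
to the curve `θ ↦ x(θ)` satisfies a hypergeometric differential equation on `(0, π/2)`. -/
theorem stmt3 (n : ℕ) (hn : 2 ≤ n) (k : ℕ) (hk : Even k)
    (P : (Fin n → ℍ[ℝ]) → ℂ) (hpoly : IsPolyFun P)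
    (hharm : ∀ x, qLap P x = 0)
    (hhom : ∀ (t : ℝ) (x : Fin n → ℍ[ℝ]), P (t • x) = (t : ℂ) ^ k * P x)
    (hleft : ∀ M : Matrix (Fin n) (Fin n) ℍ[ℝ], Mᴴ * M = 1 →
      (∀ i : Fin n, M i ⟨0, by omega⟩ = if i = ⟨0, by omega⟩ then 1 else 0) →
      (∀ j : Fin n, M ⟨0, by omega⟩ j = if j = ⟨0, by omega⟩ then 1 else 0) →
      ∀ x, P (M.mulVec x) = P x)
    (hright : ∀ q : ℍ[ℝ], ‖q‖ = 1 → ∀ x, P (fun i => x i * q) = P x) :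
    ContDiffOn ℝ (⊤ : ℕ∞) (fun θ : ℝ => P (xtheta n θ)) (Set.Ioo 0 (Real.pi / 2)) ∧
    ∀ θ ∈ Set.Ioo (0 : ℝ) (Real.pi / 2),
      deriv (deriv (fun θ : ℝ => P (xtheta n θ))) θ +
        ((6 / Real.tan (2 * θ) + (4 * (n : ℝ) - 8) / Real.tan θ : ℝ) : ℂ) *
          deriv (fun θ : ℝ => P (xtheta n θ)) θ +
        (k : ℂ) * ((k : ℂ) + 4 * (n : ℂ) - 2) * P (xtheta n θ) = 0 := by
  have hol : (⟨0, by omega⟩ : Fin n) ≠ ⟨n - 1, by omega⟩ := by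
    intro h
    have := congrArg Fin.val h
    simp at this
    omega
  set o : Fin n := ⟨0, by omega⟩ with ho
  set l : Fin n := ⟨n - 1, by omega⟩ with hl
  obtain ⟨g, hg⟩ := exists_red o l hol P hpoly
  have hx : ∀ θ, xtheta n θ = bpt o l ((Real.cos θ : ℝ) : ℍ[ℝ]) ((Real.sin θ : ℝ) : ℍ[ℝ]) := by
    intro θ
    funext i
    have e1 : i = o ↔ (i : ℕ) = 0 := by rw [ho, Fin.ext_iff]
    have e2 : i = l ↔ (i : ℕ) = n - 1 := by rw [hl, Fin.ext_iff]
    simp only [xtheta, bpt, Pi.add_apply, Pi.single_apply, e1, e2]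
    by_cases h1 : (i : ℕ) = 0
    · have : ¬ ((i : ℕ) = n - 1) := by omega
      rw [if_pos h1, if_pos h1, if_neg this, add_zero]
    · rw [if_neg h1, if_neg h1, zero_add]
  have hF : (fun θ : ℝ => P (xtheta n θ)) = fun θ : ℝ =>
      MvPolynomial.eval ![((Real.cos θ : ℝ) : ℂ), ((Real.sin θ : ℝ) : ℂ)] g := by
    funext θ
    rw [hx, hg]
  constructor
  · rw [hF]
    apply ContDiff.contDiffOn
    exact curve_smooth g
  · rintro θ ⟨h0, h1⟩
    have hb : 0 < Real.sin θ := Real.sin_pos_of_pos_of_lt_pi h0 (by linarith)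
    have ha : 0 < Real.cos θ := Real.cos_pos_of_mem_Ioo ⟨by linarith, h1⟩
    have hab := Real.sin_sq_add_cos_sq θ
    have hlap := lap_red o l hol P hleft hright g hg _ _ ha hb
    rw [hharm] at hlap
    have hFd := (curve_hasDeriv g Real.cos Real.sin _ _ θ (Real.hasDerivAt_cos θ)
      (Real.hasDerivAt_sin θ)).deriv
    have hFdd := curve_second g Real.cos Real.sin (fun t => - Real.sin t) Real.cos
      (- Real.cos θ) (- Real.sin θ) θ (Real.hasDerivAt_cos) (Real.hasDerivAt_sin)
      (Real.hasDerivAt_sin θ).neg (Real.hasDerivAt_cos θ)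
    have htan : (6 / Real.tan (2 * θ) + (4 * (n : ℝ) - 8) / Real.tan θ : ℝ) =
        (4 * n - 5) * (Real.cos θ / Real.sin θ) - 3 * (Real.sin θ / Real.cos θ) := by
      rw [Real.tan_eq_sin_div_cos, Real.tan_eq_sin_div_cos, Real.sin_two_mul, Real.cos_two_mul']
      field_simp
      ring
    rw [hF, hFd, hFdd, htan]
    rw [hx, hg]
    set a := Real.cos θ
    set b := Real.sin θ
    have hsc : ∀ t : ℝ, MvPolynomial.eval ![((t * a : ℝ) : ℂ), ((t * b : ℝ) : ℂ)] g =
        (t : ℂ) ^ k * MvPolynomial.eval ![(a : ℂ), (b : ℂ)] g := by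
      intro t
      rw [← hg, ← hg, ← hhom]
      congr 1
      rw [bpt, bpt, smul_add, ← Pi.single_smul, ← Pi.single_smul, Quaternion.smul_coe,
        Quaternion.smul_coe]
    have lin : ∀ c t : ℝ, HasDerivAt (fun t : ℝ => t * c) c t := fun c t => by
      simpa using (hasDerivAt_id t).mul_const c
    have hpow : ∀ (m : ℕ) (c : ℂ) (t : ℝ), HasDerivAt (fun t : ℝ => (t : ℂ) ^ m * c)
        ((m : ℂ) * (t : ℂ) ^ (m - 1) * c) t := by
      intro m c t
      have := (((hasDerivAt_id t).ofReal_comp).pow m).mul_const c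
      simpa using this
    have E1 := (curve_hasDeriv g (fun t => t * a) (fun t => t * b) _ _ 1 (lin a 1) (lin b 1)).deriv
    have E2 := curve_second g (fun t => t * a) (fun t => t * b) (fun _ => a) (fun _ => b) 0 0 1
      (lin a) (lin b) (hasDerivAt_const _ _) (hasDerivAt_const _ _)
    simp only [hsc] at E1 E2
    have hd : deriv (fun t : ℝ => (t : ℂ) ^ k * MvPolynomial.eval ![(a : ℂ), (b : ℂ)] g) =
        fun t : ℝ => (t : ℂ) ^ (k - 1) * (k * MvPolynomial.eval ![(a : ℂ), (b : ℂ)] g) := by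
      funext t
      rw [(hpow k _ t).deriv]
      ring
    rw [hd] at E1 E2
    rw [(hpow (k - 1) _ 1).deriv] at E2
    have hk1 : (((k - 1 : ℕ) : ℂ)) * k = (k : ℂ) ^ 2 - k := by
      rcases Nat.eq_zero_or_pos k with h | h
      · simp [h]
      · rw [Nat.cast_sub h]; push_cast; ring
    simp only [one_mul, Complex.ofReal_one, one_pow, mul_one, Complex.ofReal_zero, mul_zero,
      add_zero] at E1 E2
    rw [← mul_assoc, hk1] at E2
    have ha' : (a : ℂ) ≠ 0 := by exact_mod_cast ha.ne'
    have hb' : (b : ℂ) ≠ 0 := by exact_mod_cast hb.ne'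
    have hab' : (b : ℂ) ^ 2 + (a : ℂ) ^ 2 = 1 := by exact_mod_cast hab
    clear_value a b
    push_cast
    generalize MvPolynomial.eval ![(a : ℂ), (b : ℂ)] (MvPolynomial.pderiv 0 (MvPolynomial.pderiv 0 g)) = Gaa at *
    generalize MvPolynomial.eval ![(a : ℂ), (b : ℂ)] (MvPolynomial.pderiv 0 (MvPolynomial.pderiv 1 g)) = Gab at *
    generalize MvPolynomial.eval ![(a : ℂ), (b : ℂ)] (MvPolynomial.pderiv 1 (MvPolynomial.pderiv 1 g)) = Gbb at *
    generalize MvPolynomial.eval ![(a : ℂ), (b : ℂ)] (MvPolynomial.pderiv 0 g) = Ga at *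
    generalize MvPolynomial.eval ![(a : ℂ), (b : ℂ)] (MvPolynomial.pderiv 1 g) = Gb at *
    generalize MvPolynomial.eval ![(a : ℂ), (b : ℂ)] g = G at *
    generalize (a : ℂ) = A at *
    generalize (b : ℂ) = B at *
    have hA : A * (1 / A) = 1 := by field_simp
    have hB : B * (1 / B) = 1 := by field_simp
    rw [div_eq_mul_one_div A B, div_eq_mul_one_div B A]
    generalize 1 / A = A' at *
    generalize 1 / B = B' at *
    linear_combination (Gaa + Gbb + (4 * (n : ℂ) - 5) * B' * Gb + 3 * A' * Ga) * hab' - hlap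
      - (4 * (n : ℂ) - 5) * (A * Ga + B * Gb) * hB - 3 * (A * Ga + B * Gb) * hA + E2
      + (4 * (n : ℂ) - 1) * E1
end
end

section
/- Let n ≥ 2 be an integer and let k be an even natural number. Let P : ℍⁿ → ℂ be a complex-valued polynomial function in the 4n real coordinates of ℍⁿ ≅ ℝ^{4n} which is harmonic (its Laplacian on ℝ^{4n} vanishes), homogeneous of degree k, invariant under the left action of 1 × Sp(n−1) (P(Mx) = P(x) for all M ∈ 1 × Sp(n−1) and x ∈ ℍⁿ) and invariant under right multiplication by unit quaternions (P(xq) = P(x) for all q ∈ ℍ with |q| = 1). Define φ : (0,1) → ℂ by φ(τ) = P(x(arccos √τ)). Then φ is smooth on (0,1) and for every τ ∈ (0,1): τ(1−τ) φ''(τ) + 2(1 − nτ) φ'(τ) + (k/2)(k/2 + 2n − 1) φ(τ) = 0. -/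
noncomputable section
open scoped Quaternion
open Matrix

/-- derivative computation -/
lemma aux_deriv (φ : ℝ → ℂ) (hφ : ContDiffOn ℝ (⊤ : ℕ∞) φ (Set.Ioo 0 1)) (m : ℕ)
    (τ : ℝ) (hτ : τ ∈ Set.Ioo (0:ℝ) 1) (α β γ : ℝ) (h : ℝ → ℂ)
    (hh : ∀ t : ℝ, 0 < 1 + 2 * α * t + t ^ 2 →
      h t = (((1 + 2 * α * t + t ^ 2) ^ m : ℝ) : ℂ) *
        φ ((τ + 2 * β * t + γ * t ^ 2) / (1 + 2 * α * t + t ^ 2))) :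
    iteratedDeriv 2 h 0 = (m * (m - 1) * (2 * α) ^ 2 + 2 * m) * φ τ
      + (4 * m * α * (2 * β - 2 * α * τ) + (2 * γ - 8 * α * β - 2 * τ + 8 * τ * α ^ 2)) * deriv φ τ
      + (2 * β - 2 * α * τ) ^ 2 * deriv (deriv φ) τ := by
  have hd1 : ∀ x ∈ Set.Ioo (0:ℝ) 1, HasDerivAt φ (deriv φ x) x := fun x hx =>
    ((hφ.contDiffAt (isOpen_Ioo.mem_nhds hx)).differentiableAt (by simp)).hasDerivAt
  have hc1 : ContDiffOn ℝ (⊤ : ℕ∞) (deriv φ) (Set.Ioo 0 1) :=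
    hφ.deriv_of_isOpen isOpen_Ioo (by simp)
  have hd2 : HasDerivAt (deriv φ) (deriv (deriv φ) τ) τ :=
    ((hc1.contDiffAt (isOpen_Ioo.mem_nhds hτ)).differentiableAt (by simp)).hasDerivAt
  set N : ℝ → ℝ := fun t => 1 + 2 * α * t + t ^ 2 with hN
  set X : ℝ → ℝ := fun t => τ + 2 * β * t + γ * t ^ 2 with hX
  set N1 : ℝ → ℝ := fun t => 2 * α + 2 * t with hN1
  set X1 : ℝ → ℝ := fun t => 2 * β + 2 * γ * t with hX1
  have dN : ∀ t, HasDerivAt N (N1 t) t := fun t => by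
    have := (((hasDerivAt_id t).const_mul (2 * α)).const_add 1).add ((hasDerivAt_id t).pow 2)
    refine this.congr_deriv ?_
    simp [hN1]
  have dX : ∀ t, HasDerivAt X (X1 t) t := fun t => by
    have := (((hasDerivAt_id t).const_mul (2 * β)).const_add τ).add
      (((hasDerivAt_id t).pow 2).const_mul γ)
    refine this.congr_deriv ?_
    simp [hX1]; ring
  have dN1 : ∀ t, HasDerivAt N1 2 t := fun t => by
    have := ((hasDerivAt_id t).const_mul 2).const_add (2 * α)
    refine this.congr_deriv ?_
    simp
  have dX1 : ∀ t, HasDerivAt X1 (2 * γ) t := fun t => by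
    have := ((hasDerivAt_id t).const_mul (2 * γ)).const_add (2 * β)
    refine this.congr_deriv ?_
    simp
  have cN : Continuous N := by fun_prop
  have cX : Continuous X := by fun_prop
  have N0 : N 0 = 1 := by simp [hN]
  have X0 : X 0 = τ := by simp [hX]
  have eN : ∀ᶠ t in nhds (0:ℝ), 0 < N t :=
    cN.continuousAt.eventually (lt_mem_nhds (by rw [N0]; norm_num))
  have eF : ∀ᶠ t in nhds (0:ℝ), X t / N t ∈ Set.Ioo (0:ℝ) 1 := by
    have : ContinuousAt (fun t => X t / N t) 0 :=
      cX.continuousAt.div cN.continuousAt (by rw [N0]; norm_num)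
    apply this.eventually
    apply isOpen_Ioo.mem_nhds
    simpa [N0, X0] using hτ
  set F1 : ℝ → ℝ := fun t => (X1 t * N t - X t * N1 t) / (N t) ^ 2 with hF1
  have dF : ∀ t, 0 < N t → HasDerivAt (fun t => X t / N t) (F1 t) t := fun t ht =>
    (dX t).div (dN t) ht.ne'
  have e1 : h =ᶠ[nhds 0] fun t => (N t ^ m) • φ (X t / N t) := by
    filter_upwards [eN] with t ht
    rw [hh t ht]; simp [hN, hX]
  have e2 : deriv h =ᶠ[nhds 0] fun t => (N t ^ m) • (F1 t • deriv φ (X t / N t))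
      + (m * N t ^ (m-1) * N1 t) • φ (X t / N t) := by
    filter_upwards [eN, eF, e1.eventually_nhds] with t ht hF he
    rw [Filter.EventuallyEq.deriv_eq he]
    have := ((dN t).pow m).smul ((hd1 _ hF).scomp t (dF t ht))
    exact this.deriv
  rw [iteratedDeriv_succ, iteratedDeriv_one, e2.deriv_eq]
  have hN00 : 0 < N 0 := by rw [N0]; norm_num
  have hF00 : X 0 / N 0 = τ := by simp [N0, X0]
  have dF1 := (((dX1 0).mul (dN 0)).sub ((dX 0).mul (dN1 0))).div ((dN 0).pow 2)
    (by rw [Pi.pow_apply, N0]; norm_num)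
  have hd1' := hd1 τ hτ
  rw [← hF00] at hd2 hd1'
  have A := ((dN 0).pow m).smul (dF1.smul (hd2.scomp 0 (dF 0 hN00)))
  have B := ((((dN 0).pow (m-1)).const_mul (m:ℝ)).mul (dN1 0)).smul (hd1'.scomp 0 (dF 0 hN00))
  have hm : (m:ℂ) * ((m - 1 : ℕ) : ℂ) = m * (m - 1) := by
    cases m <;> simp
  have := (A.add B).deriv
  refine Eq.trans this ?_
  simp [N0, X0, hN1, hX1, hF1]
  linear_combination (4 * α^2 * φ τ) * hm

lemma aux_diag (n : ℕ) (z : Fin n)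
    (P : (Fin n → ℍ[ℝ]) → ℂ)
    (hleft : ∀ M : Matrix (Fin n) (Fin n) ℍ[ℝ], Mᴴ * M = 1 →
      (∀ i : Fin n, M i z = if i = z then 1 else 0) →
      (∀ j : Fin n, M z j = if j = z then 1 else 0) →
      ∀ x, P (M.mulVec x) = P x)
    (hright : ∀ q : ℍ[ℝ], ‖q‖ = 1 → ∀ x, P (fun i => x i * q) = P x)
    (x : Fin n → ℍ[ℝ]) : P x = P (fun i => ((‖x i‖ : ℝ) : ℍ[ℝ])) := by
  have h1 : ∀ q : ℍ[ℝ], ∃ w : ℍ[ℝ], ‖w‖ = 1 ∧ q = w * ((‖q‖ : ℝ) : ℍ[ℝ]) := by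
    intro q
    by_cases hq : q = 0
    · exact ⟨1, by simp, by simp [hq]⟩
    · have hq' : ‖q‖ ≠ 0 := by simpa using hq
      refine ⟨(‖q‖⁻¹ : ℝ) • q, by simp [norm_smul, hq'], ?_⟩
      rw [Quaternion.mul_coe_eq_smul, smul_smul, mul_inv_cancel₀ hq', one_smul]
  choose W hW1 hW2 using h1
  have hs : ∀ q : ℍ[ℝ], ‖q‖ = 1 → star q * q = 1 ∧ q * star q = 1 := by
    intro q hq
    have : Quaternion.normSq q = 1 := by rw [Quaternion.normSq_eq_norm_mul_self, hq]; norm_num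
    rw [Quaternion.star_mul_self, Quaternion.self_mul_star, this]; simp
  set p := W (x z) with hp
  have hp1 := hW1 (x z)
  set v : Fin n → ℍ[ℝ] := fun i => W (x i) * star p with hv
  have hv1 : ∀ i, star (v i) * v i = 1 := by
    intro i
    simp only [hv, star_mul, star_star]
    rw [mul_assoc, ← mul_assoc (star (W (x i))), (hs _ (hW1 _)).1, one_mul, (hs _ hp1).2]
  have hvz : v z = 1 := (hs _ hp1).2
  rw [← hleft (Matrix.diagonal v) ?_ ?_ ?_ (fun i => ((‖x i‖ : ℝ) : ℍ[ℝ])), ← hright p hp1 (_ *ᵥ _)]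
  · congr 1
    funext i
    rw [Matrix.mulVec_diagonal, mul_assoc, Quaternion.coe_commutes, ← mul_assoc]
    simp only [hv]
    rw [mul_assoc (W (x i)), (hs _ hp1).1, mul_one]
    exact hW2 _
  · rw [Matrix.diagonal_conjTranspose, Matrix.diagonal_mul_diagonal]
    rw [← Matrix.diagonal_one]
    congr 1; funext i; exact hv1 i
  · intro i
    by_cases h : i = z
    · subst h; simp [hvz]
    · simp [h]
  · intro i
    by_cases h : i = z
    · subst h; simp [hvz]
    · simp [h, Ne.symm h]

/-- plane rotation -/
def rotMat (n : ℕ) (j l : Fin n) (c s : ℝ) : Matrix (Fin n) (Fin n) ℝ := fun i k =>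
    if i = j then (if k = j then c else if k = l then s else 0)
    else if i = l then (if k = j then -s else if k = l then c else 0)
    else if i = k then 1 else 0

lemma rotMat_orth (n : ℕ) (j l : Fin n) (hjl : j ≠ l) (c s : ℝ) (hcs : c ^ 2 + s ^ 2 = 1) :
    (rotMat n j l c s)ᵀ * rotMat n j l c s = 1 := by
  ext i k
  rw [Matrix.mul_apply]
  simp only [Matrix.transpose_apply]
  have : ∀ q, rotMat n j l c s q i * rotMat n j l c s q k =
      (if q = j then rotMat n j l c s j i * rotMat n j l c s j k else 0)
       + (if q = l then rotMat n j l c s l i * rotMat n j l c s l k else 0)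
       + (if q = i then (if i = j ∨ i = l then 0 else rotMat n j l c s i k) else 0) := by
    intro q
    by_cases h1 : q = j
    · subst h1
      by_cases h2 : q = i
      · subst h2; simp [hjl]
      · simp [hjl, h2]
    · by_cases h2 : q = l
      · subst h2
        by_cases h3 : q = i
        · subst h3; simp [h1]
        · simp [h1, h3]
      · by_cases h3 : q = i
        · subst h3; simp [h1, h2, rotMat]
        · simp [h1, h2, h3, rotMat]
  rw [Finset.sum_congr rfl (fun q _ => this q)]
  simp only [Finset.sum_add_distrib, Finset.sum_ite_eq', Finset.mem_univ, if_true]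
  rw [Matrix.one_apply]
  simp only [rotMat]
  have hjl' := hjl.symm
  by_cases h1 : i = j
  · subst h1
    by_cases h3 : k = i
    · subst h3; simp [hjl']; linarith
    · by_cases h4 : k = l
      · subst h4; simp [hjl, h3]; ring
      · simp [h3, h4, Ne.symm h3]
  · by_cases h2 : i = l
    · subst h2
      by_cases h3 : k = j
      · subst h3; simp [hjl']; ring
      · by_cases h4 : k = i
        · subst h4; simp [h1]; linarith
        · simp [h3, h4, Ne.symm h4]
    · simp [h1, h2]

lemma aux_rot (n : ℕ) (z : Fin n)
    (P : (Fin n → ℍ[ℝ]) → ℂ)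
    (hleft : ∀ M : Matrix (Fin n) (Fin n) ℍ[ℝ], Mᴴ * M = 1 →
      (∀ i : Fin n, M i z = if i = z then 1 else 0) →
      (∀ j : Fin n, M z j = if j = z then 1 else 0) →
      ∀ x, P (M.mulVec x) = P x)
    (j l : Fin n) (hjl : j ≠ l) (hj : j ≠ z) (hl : l ≠ z)
    (y : Fin n → ℝ) (r : ℝ) (hr : r ^ 2 = y j ^ 2 + y l ^ 2) :
    P (fun i => ((y i : ℝ) : ℍ[ℝ])) = P (fun i =>
      (((if i = j then 0 else if i = l then r else y i : ℝ)) : ℍ[ℝ])) := by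
  obtain ⟨c, s, hcs, hc, hsn⟩ : ∃ c s : ℝ, c ^ 2 + s ^ 2 = 1 ∧ y l = c * r ∧ y j = s * r := by
    by_cases h : r = 0
    · refine ⟨1, 0, by norm_num, ?_, ?_⟩ <;> subst h <;> nlinarith [sq_nonneg (y j), sq_nonneg (y l)]
    · refine ⟨y l / r, y j / r, ?_, by field_simp, by field_simp⟩
      field_simp; linarith
  set R := rotMat n j l c s with hR
  have hRR : Rᵀ * R = 1 := rotMat_orth n j l hjl c s hcs
  set M : Matrix (Fin n) (Fin n) ℍ[ℝ] := R.map (algebraMap ℝ ℍ[ℝ]) with hM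
  rw [← hleft M ?_ ?_ ?_ (fun i =>
      (((if i = j then 0 else if i = l then r else y i : ℝ)) : ℍ[ℝ]))]
  · congr 1
    funext i
    have : (M.mulVec (fun i => (((if i = j then 0 else if i = l then r else y i : ℝ)) : ℍ[ℝ]))) i
        = ((R.mulVec (fun i => if i = j then 0 else if i = l then r else y i) i : ℝ) : ℍ[ℝ]) := by
      simp only [Matrix.mulVec, dotProduct, hM, Matrix.map_apply]
      refine Eq.trans ?_ (map_sum (algebraMap ℝ ℍ[ℝ]) (fun x => R i x *
        if x = j then 0 else if x = l then r else y x) Finset.univ).symm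
      refine Finset.sum_congr rfl fun q _ => ?_
      rw [map_mul]; rfl
    rw [this]
    congr 1
    simp only [Matrix.mulVec, dotProduct, hR, rotMat]
    have hjl' := hjl.symm
    by_cases h1 : i = j
    · subst h1
      rw [Finset.sum_eq_single l]
      · simp [hjl', hsn]
      · intro b _ hb; by_cases h : b = i <;> simp [hb, h]
      · simp
    · by_cases h2 : i = l
      · subst h2
        rw [Finset.sum_eq_single i]
        · simp [h1, hc]
        · intro b _ hb; by_cases h : b = j <;> simp [hb, h, h1]
        · simp
      · rw [Finset.sum_eq_single i]
        · simp [h1, h2]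
        · intro b _ hb; simp [h1, h2, hb.symm]
        · simp
  · have : Mᴴ = (Rᵀ).map (algebraMap ℝ ℍ[ℝ]) := by
      ext1 i k
      simp [hM, Matrix.conjTranspose_apply]
    rw [this, hM, ← Matrix.map_mul, hRR]
    exact Matrix.map_one _ (map_zero _) (map_one _)
  · intro i
    simp only [hM, Matrix.map_apply, hR, rotMat]
    by_cases h1 : i = j
    · subst h1; simp [hj, hj.symm, hl.symm]
    by_cases h2 : i = l
    · subst h2; simp [h1, hl, hj.symm, hl.symm]
    by_cases h3 : i = z <;> simp [h1, h2, h3]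
    · simp [hj.symm, hl.symm]
  · intro i
    simp only [hM, Matrix.map_apply, hR, rotMat]
    simp only [hj.symm, hl.symm, if_false]
    by_cases h3 : i = z
    · simp [h3]
    · simp [h3, Ne.symm h3]

lemma aux_radial (n : ℕ) (hn : 2 ≤ n) (m : ℕ) (z l : Fin n) (hz : (z : ℕ) = 0)
    (hl : (l : ℕ) = n - 1)
    (P : (Fin n → ℍ[ℝ]) → ℂ)
    (hhom : ∀ (t : ℝ) (x : Fin n → ℍ[ℝ]), P (t • x) = (t : ℂ) ^ (2 * m) * P x)
    (hleft : ∀ M : Matrix (Fin n) (Fin n) ℍ[ℝ], Mᴴ * M = 1 →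
      (∀ i : Fin n, M i z = if i = z then 1 else 0) →
      (∀ j : Fin n, M z j = if j = z then 1 else 0) →
      ∀ x, P (M.mulVec x) = P x)
    (hright : ∀ q : ℍ[ℝ], ‖q‖ = 1 → ∀ x, P (fun i => x i * q) = P x)
    (x : Fin n → ℍ[ℝ]) (j : Fin n) (hx : ∀ i, i ≠ z → i ≠ l → i ≠ j → x i = 0)
    (N X : ℝ) (hN : N = ∑ i, ‖x i‖ ^ 2) (hX : X = ‖x z‖ ^ 2) (hpos : 0 < N) :
    P x = ((N ^ m : ℝ) : ℂ) * P (xtheta n (Real.arccos (Real.sqrt (X / N)))) := by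
  have hzl : z ≠ l := by
    intro h; rw [Fin.ext_iff] at h; omega
  have key : P x = P (fun i => (((if i = z then Real.sqrt X else if i = l then
      Real.sqrt (N - X) else 0 : ℝ)) : ℍ[ℝ])) := by
    rw [aux_diag n z P hleft hright x]
    have hsX : Real.sqrt X = ‖x z‖ := by rw [hX, Real.sqrt_sq (norm_nonneg _)]
    by_cases hj : j = z ∨ j = l
    · have hNe : N = ‖x z‖ ^ 2 + ‖x l‖ ^ 2 := by
        rw [hN, ← Finset.sum_pair hzl (f := fun i => ‖x i‖ ^ 2)]
        symm
        apply Finset.sum_subset (Finset.subset_univ _)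
        intro i _ hi
        simp only [Finset.mem_insert, Finset.mem_singleton, not_or] at hi
        rw [hx i hi.1 hi.2 (by rintro rfl; tauto)]; simp
      congr 1
      funext i
      congr 1
      by_cases h1 : i = z
      · simp [h1, hsX]
      by_cases h2 : i = l
      · subst h2
        simp only [h1, if_true, if_false]
        rw [hNe, hX, add_sub_cancel_left, Real.sqrt_sq (norm_nonneg _)]
      · rw [hx i h1 h2 (by rintro rfl; tauto)]; simp [h1, h2]
    · push Not at hj
      obtain ⟨hjz, hjl⟩ := hj
      have hNe : N = ‖x z‖ ^ 2 + (‖x j‖ ^ 2 + ‖x l‖ ^ 2) := by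
        rw [hN, ← Finset.sum_pair hjl (f := fun i => ‖x i‖ ^ 2),
          ← Finset.sum_insert (f := fun i => ‖x i‖ ^ 2) (by simp [hzl, hjz.symm])]
        symm
        apply Finset.sum_subset (Finset.subset_univ _)
        intro i _ hi
        simp only [Finset.mem_insert, Finset.mem_singleton, not_or] at hi
        rw [hx i hi.1 hi.2.2 hi.2.1]; simp
      rw [aux_rot n z P hleft j l hjl hjz hzl.symm
        (fun i => ‖x i‖) (Real.sqrt (N - X)) (by
          rw [Real.sq_sqrt, hNe, hX]
          · ring
          · rw [hNe, hX, add_sub_cancel_left]; positivity)]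
      congr 1
      funext i
      congr 1
      by_cases h1 : i = z
      · subst h1; simp [hjz.symm, hzl, hsX]
      by_cases h2 : i = l
      · subst h2
        simp [h1, hjl.symm]
      by_cases h3 : i = j
      · simp [h3, hjz, hjl]
      · rw [hx i h1 h2 h3]; simp [h1, h2]
  have hX0 : 0 ≤ X := by rw [hX]; positivity
  have hXN : X ≤ N := by
    rw [hX, hN]
    exact Finset.single_le_sum (f := fun i => ‖x i‖ ^ 2) (fun i _ => by positivity)
      (Finset.mem_univ z)
  have e : (fun i => (((if i = z then Real.sqrt X else if i = l then
      Real.sqrt (N - X) else 0 : ℝ)) : ℍ[ℝ])) =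
      Real.sqrt N • xtheta n (Real.arccos (Real.sqrt (X / N))) := by
    funext i
    have hq : X / N ≤ 1 := by rw [div_le_one hpos]; exact hXN
    have hc : Real.cos (Real.arccos (Real.sqrt (X / N))) = Real.sqrt (X / N) :=
      Real.cos_arccos (by linarith [Real.sqrt_nonneg (X / N)]) (Real.sqrt_le_one.2 hq)
    have hs : Real.sin (Real.arccos (Real.sqrt (X / N))) = Real.sqrt (1 - X / N) := by
      rw [Real.sin_arccos, Real.sq_sqrt (by positivity)]
    simp only [Pi.smul_apply, xtheta, hc, hs]
    have hiz : i = z ↔ (i : ℕ) = 0 := by rw [Fin.ext_iff, hz]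
    have hil : i = l ↔ (i : ℕ) = n - 1 := by rw [Fin.ext_iff, hl]
    by_cases h1 : (i : ℕ) = 0
    · rw [if_pos (hiz.2 h1), if_pos h1, ← Quaternion.coe_mul_eq_smul, ← Quaternion.coe_mul,
        ← Real.sqrt_mul hpos.le]
      congr 2; field_simp
    · by_cases h2 : (i : ℕ) = n - 1
      · rw [if_neg (fun h => h1 (hiz.1 h)), if_neg h1, if_pos (hil.2 h2), if_pos h2,
          ← Quaternion.coe_mul_eq_smul, ← Quaternion.coe_mul, ← Real.sqrt_mul hpos.le]
        congr 2; field_simp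
      · simp [hiz, hil, h1, h2]
  rw [key, e, hhom]
  congr 1
  rw [pow_mul, ← Complex.ofReal_pow, Real.sq_sqrt hpos.le]; simp

lemma aux_smooth (n : ℕ) (P : (Fin n → ℍ[ℝ]) → ℂ) (hpoly : IsPolyFun P) :
    ContDiffOn ℝ (⊤ : ℕ∞) (fun τ : ℝ => P (xtheta n (Real.arccos (Real.sqrt τ))))
      (Set.Ioo 0 1) := by
  obtain ⟨p, hp⟩ := hpoly
  have h0 : ContDiffOn ℝ (⊤ : ℕ∞) (fun τ : ℝ => Real.arccos (Real.sqrt τ)) (Set.Ioo 0 1) := by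
    intro τ hτ
    apply ContDiffAt.contDiffWithinAt
    have h1 : Real.sqrt τ < 1 := by rw [Real.sqrt_lt' one_pos]; simpa using hτ.2
    have h2 := Real.sqrt_nonneg τ
    exact (Real.contDiffAt_arccos (by linarith) h1.ne).comp τ
      (Real.contDiffAt_sqrt hτ.1.ne')
  have hc : ∀ jl : Fin n × Fin 4, ContDiffOn ℝ (⊤ : ℕ∞) (fun τ : ℝ =>
      ((![ (xtheta n (Real.arccos (Real.sqrt τ)) jl.1).re,
        (xtheta n (Real.arccos (Real.sqrt τ)) jl.1).imI,
        (xtheta n (Real.arccos (Real.sqrt τ)) jl.1).imJ,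
        (xtheta n (Real.arccos (Real.sqrt τ)) jl.1).imK ] jl.2 : ℝ) : ℂ)) (Set.Ioo 0 1) := by
    rintro ⟨j, q⟩
    apply Complex.ofRealCLM.contDiff.comp_contDiffOn
    unfold xtheta
    by_cases h1 : (j : ℕ) = 0
    · fin_cases q <;> simp only [h1, if_true] <;> simp <;> first
        | exact contDiffOn_const
        | exact Real.contDiff_cos.comp_contDiffOn h0
    · by_cases h2 : (j : ℕ) = n - 1
      · fin_cases q <;> simp only [if_neg h1, if_pos h2] <;> simp <;> first
        | exact contDiffOn_const
        | exact Real.contDiff_sin.comp_contDiffOn h0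
      · fin_cases q <;> simp only [h1, h2, if_false] <;> simp <;> exact contDiffOn_const
  simp only [hp, MvPolynomial.eval_eq]
  refine ContDiffOn.sum fun d _ => ?_
  refine contDiffOn_const.mul ?_
  exact contDiffOn_prod fun i _ => (hc i).pow _

/-- the function `φ(τ) = P(x(arccos √τ))` attached to a harmonic, homogeneous,
bi-invariant polynomial satisfies a hypergeometric differential equation on `(0,1)`. -/
theorem stmt4 (n : ℕ) (hn : 2 ≤ n) (k : ℕ) (hk : Even k)
    (P : (Fin n → ℍ[ℝ]) → ℂ) (hpoly : IsPolyFun P)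
    (hharm : ∀ x, qLap P x = 0)
    (hhom : ∀ (t : ℝ) (x : Fin n → ℍ[ℝ]), P (t • x) = (t : ℂ) ^ k * P x)
    (hleft : ∀ M : Matrix (Fin n) (Fin n) ℍ[ℝ], Mᴴ * M = 1 →
      (∀ i : Fin n, M i ⟨0, by omega⟩ = if i = ⟨0, by omega⟩ then 1 else 0) →
      (∀ j : Fin n, M ⟨0, by omega⟩ j = if j = ⟨0, by omega⟩ then 1 else 0) →
      ∀ x, P (M.mulVec x) = P x)
    (hright : ∀ q : ℍ[ℝ], ‖q‖ = 1 → ∀ x, P (fun i => x i * q) = P x) :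
    ContDiffOn ℝ (⊤ : ℕ∞) (fun τ : ℝ => P (xtheta n (Real.arccos (Real.sqrt τ)))) (Set.Ioo 0 1) ∧
    ∀ τ ∈ Set.Ioo (0 : ℝ) 1,
      (τ : ℂ) * (1 - (τ : ℂ)) *
          deriv (deriv (fun τ : ℝ => P (xtheta n (Real.arccos (Real.sqrt τ))))) τ +
        2 * (1 - (n : ℂ) * (τ : ℂ)) *
          deriv (fun τ : ℝ => P (xtheta n (Real.arccos (Real.sqrt τ)))) τ +
        ((k : ℂ) / 2) * ((k : ℂ) / 2 + 2 * (n : ℂ) - 1) *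
          P (xtheta n (Real.arccos (Real.sqrt τ))) = 0 := by
  have hsm := aux_smooth n P hpoly
  refine ⟨hsm, ?_⟩
  intro τ hτ
  obtain ⟨m, hm⟩ := hk
  have hk2 : k = 2 * m := by omega
  subst hk2
  set φ : ℝ → ℂ := fun τ : ℝ => P (xtheta n (Real.arccos (Real.sqrt τ))) with hφ
  have hφτ : P (xtheta n (Real.arccos (Real.sqrt τ))) = φ τ := rfl
  obtain ⟨z, hz⟩ : ∃ z : Fin n, z = ⟨0, by omega⟩ := ⟨_, rfl⟩
  obtain ⟨l, hl⟩ : ∃ l : Fin n, l = ⟨n - 1, by omega⟩ := ⟨_, rfl⟩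
  have hzl : z ≠ l := by
    rw [hz, hl]; intro h; rw [Fin.mk.injEq] at h; omega
  set r : Fin n → ℝ := fun i => if i = z then Real.sqrt τ else if i = l then Real.sqrt (1 - τ)
    else 0 with hr
  have hx : xtheta n (Real.arccos (Real.sqrt τ)) = fun i => ((r i : ℝ) : ℍ[ℝ]) := by
    funext i
    have hc : Real.cos (Real.arccos (Real.sqrt τ)) = Real.sqrt τ :=
      Real.cos_arccos (by linarith [Real.sqrt_nonneg τ]) (Real.sqrt_le_one.2 hτ.2.le)
    have hs : Real.sin (Real.arccos (Real.sqrt τ)) = Real.sqrt (1 - τ) := by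
      rw [Real.sin_arccos, Real.sq_sqrt hτ.1.le]
    have hiz : i = z ↔ (i : ℕ) = 0 := by rw [hz, Fin.ext_iff]
    have hil : i = l ↔ (i : ℕ) = n - 1 := by rw [hl, Fin.ext_iff]
    simp only [xtheta, hc, hs, hr, hiz, hil]
    split_ifs <;> simp
  have hrz : r z = Real.sqrt τ := by simp [hr]
  have hrl : r l = Real.sqrt (1 - τ) := by simp [hr, hzl.symm]
  have hz2 : r z ^ 2 = τ := by rw [hrz, Real.sq_sqrt hτ.1.le]
  have hl2 : r l ^ 2 = 1 - τ := by rw [hrl, Real.sq_sqrt (by linarith [hτ.2])]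
  have hr0 : ∀ i, i ≠ z → i ≠ l → r i = 0 := fun i h1 h2 => by simp [hr, h1, h2]
  have hsum : ∑ i, r i ^ 2 = 1 := by
    have : ∑ i ∈ {z, l}, r i ^ 2 = ∑ i, r i ^ 2 := by
      apply Finset.sum_subset (Finset.subset_univ _)
      intro i _ hi
      simp only [Finset.mem_insert, Finset.mem_singleton, not_or] at hi
      rw [hr0 i hi.1 hi.2]; simp
    rw [← this, Finset.sum_pair hzl, hz2, hl2]; ring
  have hdir : ∀ (j : Fin n) (e : ℍ[ℝ]), Quaternion.normSq e = 1 →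
      qdir2 P (Pi.single j e) (xtheta n (Real.arccos (Real.sqrt τ))) =
      (m * (m - 1) * (2 * ((r j * e.re : ℝ) : ℂ)) ^ 2 + 2 * m) * φ τ
      + (4 * m * ((r j * e.re : ℝ) : ℂ) * (2 * ((if j = z then r j * e.re else 0 : ℝ) : ℂ)
          - 2 * ((r j * e.re : ℝ) : ℂ) * τ)
        + (2 * ((if j = z then 1 else 0 : ℝ) : ℂ)
          - 8 * ((r j * e.re : ℝ) : ℂ) * ((if j = z then r j * e.re else 0 : ℝ) : ℂ)
          - 2 * τ + 8 * τ * ((r j * e.re : ℝ) : ℂ) ^ 2)) * deriv φ τ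
      + (2 * ((if j = z then r j * e.re else 0 : ℝ) : ℂ)
          - 2 * ((r j * e.re : ℝ) : ℂ) * τ) ^ 2 * deriv (deriv φ) τ := by
    intro j e he
    unfold qdir2
    apply aux_deriv φ hsm m τ hτ
    intro t ht
    have hnorm : ∀ i, ‖((r i : ℝ) : ℍ[ℝ]) + t • (Pi.single j e : Fin n → ℍ[ℝ]) i‖ ^ 2 =
        r i ^ 2 + if i = j then 2 * (r j * e.re) * t + t ^ 2 else 0 := by
      intro i
      rw [pow_two, ← Quaternion.normSq_eq_norm_mul_self]
      by_cases h : i = j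
      · subst h
        rw [Quaternion.normSq_def'] at he ⊢
        simp
        linear_combination t ^ 2 * he
      · simp [h, Quaternion.normSq_def']
    refine aux_radial n hn m z l (by rw [hz]) (by rw [hl]) P hhom
      (by rw [hz]; exact hleft) hright _ j ?_ _ _ ?_ ?_ ht
    · intro i h1 h2 h3
      rw [hx]
      simp [hr0 i h1 h2, h3]
    · rw [hx]
      simp only [Pi.add_apply, Pi.smul_apply]
      rw [Finset.sum_congr rfl (fun i _ => hnorm i), Finset.sum_add_distrib, hsum]
      simp
      ring
    · rw [hx]
      simp only [Pi.add_apply, Pi.smul_apply]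
      rw [hnorm z, hz2]
      by_cases h : j = z
      · simp [h]; ring
      · simp [h, Ne.symm h]
  have hH := hharm (xtheta n (Real.arccos (Real.sqrt τ)))
  unfold qLap at hH
  have hT : ∀ j : Fin n, (qdir2 P (Pi.single j 1) (xtheta n (Real.arccos (Real.sqrt τ))) +
      qdir2 P (Pi.single j ⟨0,1,0,0⟩) (xtheta n (Real.arccos (Real.sqrt τ))) +
      qdir2 P (Pi.single j ⟨0,0,1,0⟩) (xtheta n (Real.arccos (Real.sqrt τ))) +
      qdir2 P (Pi.single j ⟨0,0,0,1⟩) (xtheta n (Real.arccos (Real.sqrt τ)))) =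
      4 * (2 * m * φ τ - 2 * τ * deriv φ τ)
      + (if j = z then (4 * m * (m - 1) * τ * φ τ
          + (8 * m * τ * (1 - τ) + 8 - 8 * τ + 8 * τ ^ 2) * deriv φ τ
          + 4 * τ * (1 - τ) ^ 2 * deriv (deriv φ) τ) else 0)
      + (if j = l then (4 * m * (m - 1) * (1 - τ) * φ τ
          + (- 8 * m * τ * (1 - τ) + 8 * τ * (1 - τ)) * deriv φ τ
          + 4 * τ ^ 2 * (1 - τ) * deriv (deriv φ) τ) else 0) := by
    intro j
    have hz2' : ((r z : ℝ) : ℂ) ^ 2 = τ := by exact_mod_cast hz2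
    have hl2' : ((r l : ℝ) : ℂ) ^ 2 = 1 - τ := by exact_mod_cast hl2
    rw [hdir j 1 (by simp), hdir j ⟨0,1,0,0⟩ ((Quaternion.normSq_def' _).trans (by norm_num)),
      hdir j ⟨0,0,1,0⟩ ((Quaternion.normSq_def' _).trans (by norm_num)),
      hdir j ⟨0,0,0,1⟩ ((Quaternion.normSq_def' _).trans (by norm_num))]
    by_cases h1 : j = z
    · subst h1
      simp only [hzl, if_true, if_false, Quaternion.re_one, mul_one, mul_zero, Complex.ofReal_zero,
        Complex.ofReal_one]
      linear_combination (4 * m * (m - 1) * φ τ + (8 * m * (1 - τ) - 8 + 8 * τ) * deriv φ τ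
        + 4 * (1 - τ) ^ 2 * deriv (deriv φ) τ) * hz2'
    by_cases h2 : j = l
    · subst h2
      simp only [h1, if_true, if_false, Quaternion.re_one, mul_one, mul_zero, Complex.ofReal_zero]
      linear_combination (4 * m * (m - 1) * φ τ + (- 8 * m * τ + 8 * τ) * deriv φ τ
        + 4 * τ ^ 2 * deriv (deriv φ) τ) * hl2'
    · simp only [h1, h2, hr0 j h1 h2, if_false, mul_zero, zero_mul, Complex.ofReal_zero]
      ring
  rw [Finset.sum_congr rfl (fun j _ => hT j), Finset.sum_add_distrib, Finset.sum_add_distrib,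
    Finset.sum_ite_eq', Finset.sum_ite_eq'] at hH
  simp only [Finset.mem_univ, if_true, Finset.sum_const, Finset.card_univ, Fintype.card_fin,
    nsmul_eq_mul] at hH
  rw [hφτ]
  push_cast
  linear_combination (1 / 4) * hH
end
end

section
/- Let n ≥ 2 and let α, β, γ ∈ ℕ with γ ≤ min(α, β). Define dR(E) f (z,w) := −(1/2) (d/dt)|_{t=0} f( cos t · z − sin t · conj(w), cos t · w + sin t · conj(z) ) − (i/2) (d/dt)|_{t=0} f( cos t · z − i sin t · conj(w), cos t · w + i sin t · conj(z) ). Then for all (z,w) ∈ ℂⁿ × ℂⁿ: if γ < β then dR(E) P_γ^{α,β}(z,w) = (β − γ) · P_γ^{α+1,β−1}(z,w), and if γ = β then dR(E) P_γ^{α,β}(z,w) = 0. In particular, for k ∈ ℕ and γ ≤ ⌊k/2⌋, the polynomial P_γ^{k−γ,γ} satisfies dR(E) P_γ^{k−γ,γ} = 0 and dR(H) P_γ^{k−γ,γ} = (k − 2γ) P_γ^{k−γ,γ}, where dR(H) f (z,w) := −i · (d/dt)|_{t=0} f(e^{it} z, e^{it} w). -/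
noncomputable section

/-- `P_γ^{α,β}(z,w) = w₁^{α−γ} conj(z₁)^{β−γ} (w₂ conj(z₁) − w₁ conj(z₂))^γ`,
in `0`-based coordinates on `ℂⁿ × ℂⁿ` with `n = m + 2`. -/
def Pq (m α β γ : ℕ) (z w : Fin (m + 2) → ℂ) : ℂ :=
  (w 0) ^ (α - γ) * ((starRingEnd ℂ) (z 0)) ^ (β - γ) *
    (w 1 * (starRingEnd ℂ) (z 0) - w 0 * (starRingEnd ℂ) (z 1)) ^ γ

/-- `dR(H) f (z,w) = −i (d/dt)|₀ f(e^{it} z, e^{it} w)`. -/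
def dRH (m : ℕ) (f : (Fin (m + 2) → ℂ) → (Fin (m + 2) → ℂ) → ℂ)
    (z w : Fin (m + 2) → ℂ) : ℂ :=
  -Complex.I * deriv (fun t : ℝ =>
    f (fun j => Complex.exp (Complex.I * (t : ℂ)) * z j)
      (fun j => Complex.exp (Complex.I * (t : ℂ)) * w j)) 0

/-- `dR(E) f (z,w) = −(1/2) (d/dt)|₀ f(cos t · z − sin t · conj w, cos t · w + sin t · conj z)
− (i/2) (d/dt)|₀ f(cos t · z − i sin t · conj w, cos t · w + i sin t · conj z)`. -/
def dRE (m : ℕ) (f : (Fin (m + 2) → ℂ) → (Fin (m + 2) → ℂ) → ℂ)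
    (z w : Fin (m + 2) → ℂ) : ℂ :=
  -(1 / 2) * deriv (fun t : ℝ =>
      f (fun j => (Real.cos t : ℂ) * z j - (Real.sin t : ℂ) * (starRingEnd ℂ) (w j))
        (fun j => (Real.cos t : ℂ) * w j + (Real.sin t : ℂ) * (starRingEnd ℂ) (z j))) 0
  - (Complex.I / 2) * deriv (fun t : ℝ =>
      f (fun j => (Real.cos t : ℂ) * z j - Complex.I * (Real.sin t : ℂ) * (starRingEnd ℂ) (w j))
        (fun j => (Real.cos t : ℂ) * w j + Complex.I * (Real.sin t : ℂ) * (starRingEnd ℂ) (z j))) 0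

lemma aux_deriv_s7 (a b c d : ℝ → ℂ) (a' b' c' d' : ℂ) (p q g : ℕ)
    (ha : HasDerivAt a a' 0) (hb : HasDerivAt b b' 0)
    (hc : HasDerivAt c c' 0) (hd : HasDerivAt d d' 0)
    (h : c' * b 0 + c 0 * b' - (a' * d 0 + a 0 * d') = 0) :
    deriv (fun t => a t ^ p * b t ^ q * (c t * b t - a t * d t) ^ g) 0 =
      (p * a 0 ^ (p - 1) * a' * b 0 ^ q + a 0 ^ p * (q * b 0 ^ (q - 1) * b')) *
        (c 0 * b 0 - a 0 * d 0) ^ g := by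
  have hD := (hc.mul hb).sub (ha.mul hd)
  rw [h] at hD
  have := (((ha.pow p).mul (hb.pow q)).mul (hD.pow g)).deriv
  refine Eq.trans this ?_
  simp

lemma aux_E (u v e : ℂ) :
    HasDerivAt (fun t : ℝ => (Real.cos t : ℂ) * u + e * (Real.sin t : ℂ) * v) (e * v) 0 := by
  have h1 := (Real.hasDerivAt_cos 0).ofReal_comp
  have h2 := (Real.hasDerivAt_sin 0).ofReal_comp
  have := (h1.mul_const u).add ((h2.const_mul e).mul_const v)
  refine HasDerivAt.congr_deriv this ?_
  simp

lemma aux_H (u e : ℂ) :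
    HasDerivAt (fun t : ℝ => Complex.exp (e * (t : ℂ)) * u) (e * u) 0 := by
  have h1 : HasDerivAt (fun t : ℝ => (t : ℂ)) 1 0 := Complex.ofRealCLM.hasDerivAt
  have := ((h1.const_mul e).cexp).mul_const u
  simpa using this

lemma dRE_Pq (m α β γ : ℕ) (z w : Fin (m + 2) → ℂ) :
    dRE m (Pq m α β γ) z w = ((β - γ : ℕ) : ℂ) *
      (w 0 ^ (α - γ + 1) * (starRingEnd ℂ) (z 0) ^ (β - γ - 1) *
        (w 1 * (starRingEnd ℂ) (z 0) - w 0 * (starRingEnd ℂ) (z 1)) ^ γ) := by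
  have key : ∀ e s : ℂ, deriv (fun t : ℝ =>
      ((Real.cos t : ℂ) * w 0 + e * (Real.sin t : ℂ) * (starRingEnd ℂ) (z 0)) ^ (α - γ) *
      ((Real.cos t : ℂ) * (starRingEnd ℂ) (z 0) + s * (Real.sin t : ℂ) * w 0) ^ (β - γ) *
      (((Real.cos t : ℂ) * w 1 + e * (Real.sin t : ℂ) * (starRingEnd ℂ) (z 1)) *
        ((Real.cos t : ℂ) * (starRingEnd ℂ) (z 0) + s * (Real.sin t : ℂ) * w 0) -
       ((Real.cos t : ℂ) * w 0 + e * (Real.sin t : ℂ) * (starRingEnd ℂ) (z 0)) *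
        ((Real.cos t : ℂ) * (starRingEnd ℂ) (z 1) + s * (Real.sin t : ℂ) * w 1)) ^ γ) 0 = _ :=
    fun e s => aux_deriv_s7 _ _ _ _ _ _ _ _ (α - γ) (β - γ) γ
      (aux_E (w 0) _ e) (aux_E _ (w 0) s) (aux_E (w 1) _ e) (aux_E _ (w 1) s)
      (by simp; ring)
  have k1 := key 1 (-1)
  have k2 := key Complex.I Complex.I
  have e1 : deriv (fun t : ℝ => Pq m α β γ
      (fun j => (Real.cos t : ℂ) * z j - (Real.sin t : ℂ) * (starRingEnd ℂ) (w j))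
      (fun j => (Real.cos t : ℂ) * w j + (Real.sin t : ℂ) * (starRingEnd ℂ) (z j))) 0 = _ := Eq.trans (by
    congr 1
    funext t
    simp only [Pq, map_sub, map_mul, Complex.conj_ofReal, Complex.conj_conj]
    simp only [one_mul, neg_mul, sub_eq_add_neg]) k1
  have e2 : deriv (fun t : ℝ => Pq m α β γ
      (fun j => (Real.cos t : ℂ) * z j - Complex.I * (Real.sin t : ℂ) * (starRingEnd ℂ) (w j))
      (fun j => (Real.cos t : ℂ) * w j + Complex.I * (Real.sin t : ℂ) * (starRingEnd ℂ) (z j))) 0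
      = _ := Eq.trans (by
    congr 1
    funext t
    simp only [Pq, map_sub, map_mul, Complex.conj_ofReal, Complex.conj_conj, Complex.conj_I]
    simp only [neg_mul, sub_neg_eq_add]) k2
  rw [dRE, e1, e2]
  simp only [Real.cos_zero, Real.sin_zero, Complex.ofReal_one, Complex.ofReal_zero, mul_zero,
    zero_mul, add_zero, one_mul]
  rw [pow_succ]
  generalize (w 1 * (starRingEnd ℂ) (z 0) - w 0 * (starRingEnd ℂ) (z 1)) ^ γ = D
  generalize (starRingEnd ℂ) (z 0) ^ (β - γ - 1) = B
  generalize (starRingEnd ℂ) (z 0) ^ (β - γ) = B'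
  generalize (w 0) ^ (α - γ - 1) = A
  generalize (w 0) ^ (α - γ) = A'
  linear_combination (-(1 / 2) * ((α - γ : ℕ) * A * (starRingEnd ℂ) (z 0) * B' +
    A' * ((β - γ : ℕ) * B * w 0)) * D) * Complex.I_sq

lemma dRH_Pq (m α γ : ℕ) (z w : Fin (m + 2) → ℂ) :
    dRH m (Pq m α γ γ) z w = ((α - γ : ℕ) : ℂ) * Pq m α γ γ z w := by
  have k := aux_deriv_s7 _ _ _ _ _ _ _ _ (α - γ) (γ - γ) γ
      (aux_H (w 0) Complex.I) (aux_H ((starRingEnd ℂ) (z 0)) (-Complex.I))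
      (aux_H (w 1) Complex.I) (aux_H ((starRingEnd ℂ) (z 1)) (-Complex.I)) (by simp; ring)
  have e : deriv (fun t : ℝ => Pq m α γ γ
      (fun j => Complex.exp (Complex.I * (t : ℂ)) * z j)
      (fun j => Complex.exp (Complex.I * (t : ℂ)) * w j)) 0 = _ := Eq.trans (by
    congr 1
    funext t
    simp only [Pq, map_mul, Complex.conj_ofReal, ← Complex.exp_conj, Complex.conj_I]) k
  rw [dRH, e, Pq]
  simp only [Complex.ofReal_zero, mul_zero, Complex.exp_zero, one_mul, Nat.sub_self, pow_zero,
    Nat.cast_zero, zero_mul, add_zero, mul_one]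
  rcases Nat.eq_zero_or_pos (α - γ) with h | h
  · simp [h]
  · obtain ⟨n, hn⟩ := Nat.exists_eq_succ_of_ne_zero h.ne'
    rw [hn, Nat.succ_sub_one, pow_succ]
    generalize (w 1 * (starRingEnd ℂ) (z 0) - w 0 * (starRingEnd ℂ) (z 1)) ^ γ = D
    linear_combination (-(n.succ : ℂ) * w 0 ^ n * w 0 * D) * Complex.I_sq

/-- here `n = m + 2` (so `n ≥ 2`).  Action of the raising operator `dR(E)` on the
polynomials `P_γ^{α,β}`; in particular `P_γ^{k−γ,γ}` is a highest weight vector of weight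
`k − 2γ` for the right action of `Sp(1)`. -/
theorem stmt7 (m α β γ : ℕ) (hγ : γ ≤ min α β) :
    (∀ z w : Fin (m + 2) → ℂ,
      (γ < β → dRE m (Pq m α β γ) z w = ((β : ℂ) - (γ : ℂ)) * Pq m (α + 1) (β - 1) γ z w) ∧
      (γ = β → dRE m (Pq m α β γ) z w = 0)) ∧
    (∀ (k γ' : ℕ), γ' ≤ k / 2 → ∀ z w : Fin (m + 2) → ℂ,
      dRE m (Pq m (k - γ') γ' γ') z w = 0 ∧
      dRH m (Pq m (k - γ') γ' γ') z w = ((k : ℂ) - 2 * (γ' : ℂ)) * Pq m (k - γ') γ' γ' z w) := by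
  refine ⟨fun z w => ⟨fun h => ?_, fun h => ?_⟩, fun k g hg z w => ⟨?_, ?_⟩⟩
  · have h1 : α + 1 - γ = α - γ + 1 := by omega
    have h2 : β - 1 - γ = β - γ - 1 := by omega
    rw [dRE_Pq, Pq, h1, h2, Nat.cast_sub h.le]
  · subst h
    rw [dRE_Pq]
    simp
  · rw [dRE_Pq]
    simp
  · have h1 : k - g - g = k - 2 * g := by omega
    have h2 : 2 * g ≤ k := by omega
    rw [dRH_Pq, h1, Nat.cast_sub h2]
    push_cast
    ring
end
end

section
/- Let n ≥ 2 and let α, β, γ ∈ ℕ with γ ≤ min(α, β). Define dR(F) f (z,w) := (1/2) (d/dt)|_{t=0} f( cos t · z − sin t · conj(w), cos t · w + sin t · conj(z) ) − (i/2) (d/dt)|_{t=0} f( cos t · z − i sin t · conj(w), cos t · w + i sin t · conj(z) ). Then for all (z,w) ∈ ℂⁿ × ℂⁿ: if γ < α then dR(F) P_γ^{α,β}(z,w) = (α − γ) · P_γ^{α−1,β+1}(z,w), and if γ = α then dR(F) P_γ^{α,β}(z,w) = 0. -/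
noncomputable section

/-- `dR(F) f (z,w) = (1/2) (d/dt)|₀ f(cos t · z − sin t · conj w, cos t · w + sin t · conj z)
− (i/2) (d/dt)|₀ f(cos t · z − i sin t · conj w, cos t · w + i sin t · conj z)`. -/
def dRF (m : ℕ) (f : (Fin (m + 2) → ℂ) → (Fin (m + 2) → ℂ) → ℂ)
    (z w : Fin (m + 2) → ℂ) : ℂ :=
  (1 / 2) * deriv (fun t : ℝ =>
      f (fun j => (Real.cos t : ℂ) * z j - (Real.sin t : ℂ) * (starRingEnd ℂ) (w j))
        (fun j => (Real.cos t : ℂ) * w j + (Real.sin t : ℂ) * (starRingEnd ℂ) (z j))) 0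
  - (Complex.I / 2) * deriv (fun t : ℝ =>
      f (fun j => (Real.cos t : ℂ) * z j - Complex.I * (Real.sin t : ℂ) * (starRingEnd ℂ) (w j))
        (fun j => (Real.cos t : ℂ) * w j + Complex.I * (Real.sin t : ℂ) * (starRingEnd ℂ) (z j))) 0

theorem hasDerivAt_of_eq' {f g : ℝ → ℂ} {a b : ℂ} {x : ℝ} (h : HasDerivAt f a x)
    (hf : ∀ t, g t = f t) (hab : b = a) : HasDerivAt g b x := by
  have : g = f := funext hf
  rw [this, hab]
  exact h

theorem Pq_hasDerivAt (m α β γ : ℕ) (c : ℂ) (z w : Fin (m + 2) → ℂ) :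
    HasDerivAt (fun t : ℝ => Pq m α β γ
      (fun j => (Real.cos t : ℂ) * z j - c * (Real.sin t : ℂ) * (starRingEnd ℂ) (w j))
      (fun j => (Real.cos t : ℂ) * w j + c * (Real.sin t : ℂ) * (starRingEnd ℂ) (z j)))
      (((((α - γ : ℕ) : ℂ) * (w 0) ^ (α - γ - 1) * (c * (starRingEnd ℂ) (z 0))) *
          ((starRingEnd ℂ) (z 0)) ^ (β - γ) +
        (w 0) ^ (α - γ) * (((β - γ : ℕ) : ℂ) * ((starRingEnd ℂ) (z 0)) ^ (β - γ - 1) *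
          (-((starRingEnd ℂ) c * w 0)))) *
        (w 1 * (starRingEnd ℂ) (z 0) - w 0 * (starRingEnd ℂ) (z 1)) ^ γ) 0 := by
  have hc : HasDerivAt (fun t : ℝ => (Real.cos t : ℂ)) 0 0 := by
    simpa using (Real.hasDerivAt_cos 0).ofReal_comp
  have hs : HasDerivAt (fun t : ℝ => (Real.sin t : ℂ)) 1 0 := by
    simpa using (Real.hasDerivAt_sin 0).ofReal_comp
  have hw : ∀ j, HasDerivAt (fun t : ℝ => (Real.cos t : ℂ) * w j
      + c * (Real.sin t : ℂ) * (starRingEnd ℂ) (z j)) (c * (starRingEnd ℂ) (z j)) 0 := by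
    intro j
    have h := (hc.mul_const (w j)).add ((hs.const_mul c).mul_const ((starRingEnd ℂ) (z j)))
    exact hasDerivAt_of_eq' h (fun t => rfl) (by ring)
  have hz : ∀ j, HasDerivAt (fun t : ℝ => (starRingEnd ℂ) ((Real.cos t : ℂ) * z j
      - c * (Real.sin t : ℂ) * (starRingEnd ℂ) (w j))) (-((starRingEnd ℂ) c * w j)) 0 := by
    intro j
    have h := (hc.mul_const ((starRingEnd ℂ) (z j))).sub
      ((hs.const_mul ((starRingEnd ℂ) c)).mul_const (w j))
    refine hasDerivAt_of_eq' h (fun t => ?_) ?_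
    · simp only [map_sub, map_mul, Complex.conj_ofReal, Complex.conj_conj, Pi.sub_apply]
    · ring
  have h := (((hw 0).pow (α - γ)).mul ((hz 0).pow (β - γ))).mul
    ((((hw 1).mul (hz 0)).sub ((hw 0).mul (hz 1))).pow γ)
  refine hasDerivAt_of_eq' h (fun t => rfl) ?_
  simp only [Pi.mul_apply, Pi.pow_apply, Pi.sub_apply, Real.cos_zero, Real.sin_zero,
    Complex.ofReal_one, Complex.ofReal_zero, mul_zero, zero_mul, one_mul, add_zero, sub_zero]
  ring

/-- here `n = m + 2` (so `n ≥ 2`).  Action of the lowering operator `dR(F)`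
on the polynomials `P_γ^{α,β}`. -/
theorem stmt8 (m α β γ : ℕ) (hγ : γ ≤ min α β) (z w : Fin (m + 2) → ℂ) :
    (γ < α → dRF m (Pq m α β γ) z w = ((α : ℂ) - (γ : ℂ)) * Pq m (α - 1) (β + 1) γ z w) ∧
    (γ = α → dRF m (Pq m α β γ) z w = 0) := by
  obtain ⟨h1, h2⟩ := le_min_iff.mp hγ
  have e1 := (Pq_hasDerivAt m α β γ 1 z w).deriv
  have e2 := (Pq_hasDerivAt m α β γ Complex.I z w).deriv
  simp only [one_mul, map_one] at e1
  have key : dRF m (Pq m α β γ) z w = ((α - γ : ℕ) : ℂ) * (w 0) ^ (α - γ - 1) *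
      ((starRingEnd ℂ) (z 0)) ^ (β - γ + 1) *
      (w 1 * (starRingEnd ℂ) (z 0) - w 0 * (starRingEnd ℂ) (z 1)) ^ γ := by
    unfold dRF
    rw [e1, e2, Complex.conj_I]
    ring_nf
    simp only [Complex.I_sq]
    ring
  refine ⟨fun h => ?_, fun h => ?_⟩
  · rw [key, Pq, Nat.cast_sub h1, show α - 1 - γ = α - γ - 1 by omega,
      show β + 1 - γ = β - γ + 1 by omega]
    ring
  · rw [key, h]
    simp
end
end

section
/- Let ν ∈ ℕ, ρ > 0 and a > 0 be real. Then J_ν(ρ) = (1/(2π)) · e^{−iν(a − π/2)} · ∫_0^{2π} e^{iνθ} · e^{−iρ( cos a · cos θ + sin a · sin θ )} dθ. -/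
noncomputable section

/-- Bessel function of the first kind (for positive real argument):
`J_ν(x) = ∑_{k≥0} (−1)^k / (Γ(k+1) Γ(k+ν+1)) (x/2)^{ν+2k}`. -/
def besselJ (ν : ℂ) (x : ℝ) : ℂ :=
  ∑' k : ℕ, (-1) ^ k / (Complex.Gamma ((k : ℂ) + 1) * Complex.Gamma ((k : ℂ) + ν + 1)) *
    ((x : ℂ) / 2) ^ (ν + 2 * (k : ℂ))

open Complex in
lemma bessel_int_exp (n : ℤ) :
    ∫ θ in (0 : ℝ)..(2 * Real.pi), Complex.exp (Complex.I * (n : ℂ) * (θ : ℂ))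
      = if n = 0 then 2 * (Real.pi : ℂ) else 0 := by
  split_ifs with h
  · subst h; simp
  · have hc : Complex.I * (n : ℂ) ≠ 0 := mul_ne_zero Complex.I_ne_zero (by exact_mod_cast h)
    rw [integral_exp_mul_complex hc]
    have : Complex.exp (Complex.I * (n : ℂ) * ((2 * Real.pi : ℝ) : ℂ)) = 1 := by
      rw [Complex.exp_eq_one_iff]
      exact ⟨n, by push_cast; ring⟩
    rw [this]; simp

/-- coefficients of the double series -/
def besselCoef (z : ℂ) (a : ℝ) (p : ℕ × ℕ) : ℂ :=
  z ^ p.1 / (p.1.factorial : ℂ) * (z ^ p.2 / (p.2.factorial : ℂ)) *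
    Complex.exp (-Complex.I * (a : ℂ) * ((p.1 : ℂ) - (p.2 : ℂ)))

lemma bessel_expsum (x : ℂ) :
    HasSum (fun n : ℕ => x ^ n / (n.factorial : ℂ)) (Complex.exp x) := by
  rw [Complex.exp_eq_exp_ℂ]
  exact NormedSpace.expSeries_div_hasSum_exp x

lemma bessel_summable (z : ℂ) :
    Summable (fun n : ℕ => ‖z ^ n / (n.factorial : ℂ)‖) :=
  NormedSpace.norm_expSeries_div_summable z

lemma bessel_series (ν : ℕ) (z : ℂ) (a θ : ℝ) :
    HasSum (fun p : ℕ × ℕ => besselCoef z a p *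
        Complex.exp (Complex.I * (((ν : ℤ) + p.1 - p.2 : ℤ) : ℂ) * (θ : ℂ)))
      (Complex.exp (Complex.I * (ν : ℂ) * (θ : ℂ)) *
        Complex.exp (2 * z * ((Real.cos a * Real.cos θ + Real.sin a * Real.sin θ : ℝ) : ℂ))) := by
  have hw := bessel_expsum (z * Complex.exp (Complex.I * ((θ : ℂ) - a)))
  have hw' := bessel_expsum (z * Complex.exp (-(Complex.I * ((θ : ℂ) - a))))
  have hs := summable_mul_of_summable_norm
    (bessel_summable (z * Complex.exp (Complex.I * ((θ : ℂ) - a))))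
    (bessel_summable (z * Complex.exp (-(Complex.I * ((θ : ℂ) - a)))))
  have h := (hw.mul hw' hs).mul_left (Complex.exp (Complex.I * (ν : ℂ) * (θ : ℂ)))
  convert h using 1
  · rfl
  · funext p
    unfold besselCoef
    rw [mul_pow, mul_pow, ← Complex.exp_nat_mul, ← Complex.exp_nat_mul]
    have : Complex.exp (-Complex.I * (a : ℂ) * ((p.1 : ℂ) - (p.2 : ℂ))) *
        Complex.exp (Complex.I * (((ν : ℤ) + p.1 - p.2 : ℤ) : ℂ) * (θ : ℂ)) =
        Complex.exp (Complex.I * (ν : ℂ) * (θ : ℂ)) *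
        (Complex.exp (p.1 * (Complex.I * ((θ : ℂ) - a))) *
         Complex.exp (p.2 * (-(Complex.I * ((θ : ℂ) - a))))) := by
      rw [← Complex.exp_add, ← Complex.exp_add, ← Complex.exp_add]
      congr 1
      push_cast
      ring
    linear_combination (z ^ p.1 / (p.1.factorial : ℂ) * (z ^ p.2 / (p.2.factorial : ℂ))) * this
  · congr 1
    rw [← Complex.exp_add]
    congr 1
    have h1 : (Real.cos a * Real.cos θ + Real.sin a * Real.sin θ : ℝ) = Real.cos (θ - a) := by
      rw [Real.cos_sub]; ring
    rw [h1, Complex.ofReal_cos, Complex.cos]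
    push_cast
    ring_nf

lemma bessel_integral (ν : ℕ) (z : ℂ) (a : ℝ) :
    HasSum (fun p : ℕ × ℕ => besselCoef z a p *
        (if ((ν : ℤ) + p.1 - p.2 : ℤ) = 0 then 2 * (Real.pi : ℂ) else 0))
      (∫ θ in (0 : ℝ)..(2 * Real.pi), Complex.exp (Complex.I * (ν : ℂ) * (θ : ℂ)) *
        Complex.exp (2 * z * ((Real.cos a * Real.cos θ + Real.sin a * Real.sin θ : ℝ) : ℂ))) := by
  have key := intervalIntegral.hasSum_integral_of_dominated_convergence
    (μ := MeasureTheory.volume) (a := 0) (b := 2 * Real.pi)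
    (F := fun (p : ℕ × ℕ) (θ : ℝ) => besselCoef z a p *
        Complex.exp (Complex.I * (((ν : ℤ) + p.1 - p.2 : ℤ) : ℂ) * (θ : ℂ)))
    (f := fun θ : ℝ => Complex.exp (Complex.I * (ν : ℂ) * (θ : ℂ)) *
        Complex.exp (2 * z * ((Real.cos a * Real.cos θ + Real.sin a * Real.sin θ : ℝ) : ℂ)))
    (fun p _ => ‖z ^ p.1 / (p.1.factorial : ℂ)‖ * ‖z ^ p.2 / (p.2.factorial : ℂ)‖)
    ?_ ?_ ?_ ?_ ?_
  · convert key using 1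
    · rfl
    funext p
    rw [intervalIntegral.integral_const_mul, bessel_int_exp]
  · intro p
    apply Continuous.aestronglyMeasurable
    fun_prop
  · intro p
    refine Filter.Eventually.of_forall fun θ _ => ?_
    have e1 : ‖Complex.exp (-Complex.I * (a : ℂ) * ((p.1 : ℂ) - (p.2 : ℂ)))‖ = 1 := by
      rw [Complex.norm_exp]; simp
    have e2 : ‖Complex.exp (Complex.I * (((ν : ℤ) + p.1 - p.2 : ℤ) : ℂ) * (θ : ℂ))‖ = 1 := by
      rw [Complex.norm_exp]; simp
    unfold besselCoef
    rw [norm_mul, norm_mul, e1, e2, norm_mul]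
    simp
  · refine Filter.Eventually.of_forall fun θ _ => ?_
    exact (bessel_summable z).mul_of_nonneg (bessel_summable z)
      (fun _ => norm_nonneg _) (fun _ => norm_nonneg _)
  · exact intervalIntegrable_const
  · exact Filter.Eventually.of_forall fun θ _ => bessel_series ν z a θ

lemma bessel_single (ν : ℕ) (z : ℂ) (a : ℝ) :
    HasSum (fun m : ℕ => besselCoef z a (m, m + ν) * (2 * (Real.pi : ℂ)))
      (∫ θ in (0 : ℝ)..(2 * Real.pi), Complex.exp (Complex.I * (ν : ℂ) * (θ : ℂ)) *
        Complex.exp (2 * z * ((Real.cos a * Real.cos θ + Real.sin a * Real.sin θ : ℝ) : ℂ))) := by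
  have hi : Function.Injective (fun m : ℕ => (m, m + ν)) := fun x y h => (Prod.ext_iff.1 h).1
  have h := (hi.hasSum_iff (f := fun p : ℕ × ℕ => besselCoef z a p *
        (if ((ν : ℤ) + p.1 - p.2 : ℤ) = 0 then 2 * (Real.pi : ℂ) else 0)) ?_).2
        (bessel_integral ν z a)
  · convert h using 1
    funext m
    simp only [Function.comp]
    rw [if_pos (by push_cast; ring)]
  · rintro ⟨m, k⟩ hp
    rw [if_neg, mul_zero]
    intro h0
    apply hp
    refine ⟨m, ?_⟩
    simp only [Prod.mk.injEq, true_and]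
    simp only at h0
    omega

/-- integral representation of the Bessel functions of integer order. -/
theorem stmt11 (ν : ℕ) (ρ a : ℝ) (hρ : 0 < ρ) (ha : 0 < a) :
    besselJ (ν : ℂ) ρ
      = (1 / (2 * (Real.pi : ℂ))) *
          Complex.exp (-Complex.I * (ν : ℂ) * ((a : ℂ) - (Real.pi : ℂ) / 2)) *
          ∫ θ in (0 : ℝ)..(2 * Real.pi),
            Complex.exp (Complex.I * (ν : ℂ) * (θ : ℂ)) *
              Complex.exp (-Complex.I * (ρ : ℂ) *
                ((Real.cos a * Real.cos θ + Real.sin a * Real.sin θ : ℝ) : ℂ)) := by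
  have h := bessel_single ν (-Complex.I * (ρ : ℂ) / 2) a
  have e : 2 * (-Complex.I * (ρ : ℂ) / 2) = -Complex.I * (ρ : ℂ) := by ring
  rw [e] at h
  have h2 := h.mul_left ((1 / (2 * (Real.pi : ℂ))) *
          Complex.exp (-Complex.I * (ν : ℂ) * ((a : ℂ) - (Real.pi : ℂ) / 2)))
  rw [← h2.tsum_eq]
  unfold besselJ
  congr 1
  funext k
  have hpi : (Real.pi : ℂ) ≠ 0 := by exact_mod_cast Real.pi_ne_zero
  have g1 : Complex.Gamma ((k : ℂ) + 1) = (k.factorial : ℂ) := Complex.Gamma_nat_eq_factorial k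
  have g2 : Complex.Gamma ((k : ℂ) + ν + 1) = ((k + ν).factorial : ℂ) := by
    rw [← Complex.Gamma_nat_eq_factorial]; push_cast; rfl
  have g3 : ((ρ : ℂ) / 2) ^ ((ν : ℂ) + 2 * (k : ℂ)) = ((ρ : ℂ) / 2) ^ (ν + 2 * k) := by
    rw [← Complex.cpow_natCast]; push_cast; rfl
  have g4 : Complex.exp (-Complex.I * (ν : ℂ) * ((a : ℂ) - (Real.pi : ℂ) / 2)) *
      Complex.exp (-Complex.I * (a : ℂ) * ((k : ℂ) - ((k + ν : ℕ) : ℂ))) = Complex.I ^ ν := by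
    rw [← Complex.exp_add]
    conv_rhs => rw [← Complex.exp_pi_div_two_mul_I]
    rw [← Complex.exp_nat_mul]
    congr 1
    push_cast
    ring
  have g5 : (-Complex.I) ^ k * (-Complex.I) ^ (k + ν) * Complex.I ^ ν = (-1) ^ k := by
    rw [pow_add, ← mul_assoc, ← mul_pow, mul_assoc, ← mul_pow]
    simp
  rw [g1, g2, g3]
  unfold besselCoef
  have f1 : (k.factorial : ℂ) ≠ 0 := by exact_mod_cast k.factorial_ne_zero
  have f2 : ((k + ν).factorial : ℂ) ≠ 0 := by exact_mod_cast (k + ν).factorial_ne_zero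
  have g6 : (-Complex.I * (ρ : ℂ) / 2) = -Complex.I * ((ρ : ℂ) / 2) := by ring
  simp only
  rw [g6, mul_pow, mul_pow, ← g5, ← g4]
  field_simp
  ring
end
end

section
/- Let y > 0, a > 0 and b > 0 be real numbers, let μ ∈ ℂ, and let ν ∈ ℂ satisfy Re ν > −1. Then ∫_0^∞ x^{ν + 1/2} · (x² + b²)^{−μ/2} · K_μ( a √(x² + b²) ) · J_ν(xy) · √(xy) dx = a^{−μ} · b^{ν + 1 − μ} · y^{ν + 1/2} · (a² + y²)^{(μ − ν − 1)/2} · K_{μ−ν−1}( b √(a² + y²) ), where all complex powers of positive real numbers are principal. -/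
noncomputable section

/-- Modified Bessel function of the third kind:
`K_ν(w) = ∫_0^∞ exp(−w cosh t) cosh(ν t) dt`. -/
def besselK (ν w : ℂ) : ℂ :=
  ∫ t in Set.Ioi (0:ℝ), Complex.exp (-w * (Real.cosh t : ℂ)) * Complex.cosh (ν * (t : ℂ))

open MeasureTheory Set

lemma tau_real_integrable (s A B : ℝ) (hA : 0 < A) (hB : 0 < B) :
    IntegrableOn (fun τ : ℝ => τ ^ s * Real.exp (-A * τ - B / τ)) (Ioi 0) := by
  obtain ⟨n, hn⟩ := exists_nat_gt (-1 - s)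
  have h1 := integrableOn_rpow_mul_exp_neg_mul_rpow (p := 1) (s := s + n) (b := A)
    (by linarith) one_pos hA
  have h2 := h1.const_mul ((n.factorial : ℝ) / B ^ n)
  refine Integrable.mono' h2 ?_ ?_
  · exact Measurable.aestronglyMeasurable (by fun_prop)
  · refine (ae_restrict_iff' measurableSet_Ioi).2 (Filter.Eventually.of_forall fun τ hτ => ?_)
    have hτ : 0 < τ := hτ
    have h3 := Real.pow_div_factorial_le_exp (B / τ) (by positivity) n
    have h4 : Real.exp (-(B / τ)) ≤ n.factorial / B ^ n * τ ^ n := by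
      rw [Real.exp_neg]
      refine (inv_anti₀ (by positivity) h3).trans (le_of_eq ?_)
      rw [div_pow]; field_simp
    rw [Real.norm_of_nonneg (by positivity), sub_eq_add_neg, Real.exp_add, Real.rpow_add hτ,
      Real.rpow_natCast, Real.rpow_one]
    calc _ = (τ ^ s * Real.exp (-A * τ)) * Real.exp (-(B / τ)) := by ring
      _ ≤ (τ ^ s * Real.exp (-A * τ)) * (n.factorial / B ^ n * τ ^ n) := by gcongr
      _ = _ := by ring

lemma tau_norm (l : ℂ) (A B τ : ℝ) (hτ : 0 < τ) :
    ‖(τ : ℂ) ^ (l - 1) * Complex.exp ((-A * τ - B / τ : ℝ) : ℂ)‖ =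
      τ ^ (l.re - 1) * Real.exp (-A * τ - B / τ) := by
  rw [norm_mul, Complex.norm_cpow_eq_rpow_re_of_pos hτ, Complex.norm_exp, Complex.ofReal_re]
  simp

lemma tau_integrable (l : ℂ) (A B : ℝ) (hA : 0 < A) (hB : 0 < B) :
    IntegrableOn (fun τ : ℝ => (τ : ℂ) ^ (l - 1) * Complex.exp ((-A * τ - B / τ : ℝ) : ℂ))
      (Ioi 0) := by
  refine Integrable.mono' (tau_real_integrable (l.re - 1) A B hA hB) ?_ ?_
  · exact Measurable.aestronglyMeasurable (by fun_prop)
  · refine (ae_restrict_iff' measurableSet_Ioi).2 (Filter.Eventually.of_forall fun τ hτ => ?_)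
    exact (tau_norm l A B τ hτ).le

lemma tau_integral (l : ℂ) (A B : ℝ) (hA : 0 < A) (hB : 0 < B) :
    ∫ τ in Ioi (0:ℝ), (τ : ℂ) ^ (l - 1) * Complex.exp ((-A * τ - B / τ : ℝ) : ℂ) =
      2 * ((B / A : ℝ) : ℂ) ^ (l / 2) * besselK l ((2 * Real.sqrt (A * B) : ℝ) : ℂ) := by
  set c := Real.sqrt (B / A) with hc
  have hcpos : 0 < c := by positivity
  have himg : (fun t : ℝ => c * Real.exp t) '' univ = Ioi 0 := by
    ext x
    simp only [image_univ, mem_range, mem_Ioi]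
    constructor
    · rintro ⟨t, rfl⟩; positivity
    · intro hx
      exact ⟨Real.log (x / c), by rw [Real.exp_log (by positivity)]; field_simp⟩
  have hder : ∀ t ∈ (univ : Set ℝ), HasDerivWithinAt (fun t : ℝ => c * Real.exp t)
      (c * Real.exp t) univ t := fun t _ => ((Real.hasDerivAt_exp t).const_mul c).hasDerivWithinAt
  have hinj : InjOn (fun t : ℝ => c * Real.exp t) univ := by
    intro t _ u _ h
    simpa [hcpos.ne'] using h
  have hint := tau_integrable l A B hA hB
  set f : ℝ → ℂ := fun τ => (τ : ℂ) ^ (l - 1) * Complex.exp ((-A * τ - B / τ : ℝ) : ℂ) with hf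
  set w : ℝ := 2 * Real.sqrt (A * B) with hw
  let h : ℝ → ℂ := fun t => Complex.exp (-(w:ℂ) * (Real.cosh t : ℂ)) * Complex.exp (l * t)
  have hcA : A * c = Real.sqrt (A * B) := by
    rw [hc, ← Real.sqrt_sq hA.le, ← Real.sqrt_mul (by positivity), Real.sqrt_sq hA.le]
    congr 1; field_simp
  have hcB : B / c = Real.sqrt (A * B) := by
    rw [← hcA, div_eq_iff hcpos.ne', mul_assoc, hc, Real.mul_self_sqrt (by positivity)]
    field_simp
  have hcl : (c : ℂ) ^ l = ((B / A : ℝ) : ℂ) ^ (l / 2) := by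
    rw [hc, Real.sqrt_eq_rpow, Complex.ofReal_cpow (by positivity), ← Complex.cpow_mul]
    · congr 1; push_cast; ring
    · rw [← Complex.ofReal_log (by positivity)]; norm_cast
      simp [Real.pi_pos]
    · rw [← Complex.ofReal_log (by positivity)]; norm_cast
      simp [Real.pi_pos.le]
  have key : ∀ t : ℝ, |c * Real.exp t| • f (c * Real.exp t) =
      ((B / A : ℝ) : ℂ) ^ (l / 2) * h t := by
    intro t
    have hp : 0 < c * Real.exp t := by positivity
    rw [abs_of_pos hp, hf, ← hcl]
    simp only [h]
    have e1 : (-A * (c * Real.exp t) - B / (c * Real.exp t) : ℝ) = - w * Real.cosh t := by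
      rw [← div_div, hcB, hw, Real.cosh_eq, Real.exp_neg, ← mul_assoc, neg_mul, hcA]
      field_simp; ring
    rw [e1]
    have e2 : ((c * Real.exp t : ℝ) : ℂ) ^ (l - 1) * ((c * Real.exp t : ℝ) : ℂ) =
        (c : ℂ) ^ l * Complex.exp (l * t) := by
      nth_rewrite 2 [← Complex.cpow_one ((c * Real.exp t : ℝ) : ℂ)]
      rw [← Complex.cpow_add _ _ (by exact_mod_cast hp.ne'), sub_add_cancel, Complex.ofReal_mul,
        Complex.mul_cpow_ofReal_nonneg hcpos.le (Real.exp_pos t).le,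
        Complex.cpow_def_of_ne_zero (x := ((Real.exp t : ℝ) : ℂ)) (by exact_mod_cast (Real.exp_pos t).ne'),
        ← Complex.ofReal_log (Real.exp_pos t).le, Real.log_exp, mul_comm (t : ℂ)]
    rw [Complex.real_smul]
    calc _ = (((c * Real.exp t : ℝ) : ℂ) ^ (l - 1) * ((c * Real.exp t : ℝ) : ℂ)) *
          Complex.exp ((-w * Real.cosh t : ℝ) : ℂ) := by ring
      _ = _ := by rw [e2]; push_cast; ring
  have hne : ((B / A : ℝ) : ℂ) ^ (l / 2) ≠ 0 := by
    rw [Complex.cpow_def_of_ne_zero (by exact_mod_cast (div_pos hB hA).ne')]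
    exact Complex.exp_ne_zero _
  have hI : Integrable h := by
    rw [← himg, integrableOn_image_iff_integrableOn_abs_deriv_smul MeasurableSet.univ hder hinj,
      integrableOn_univ] at hint
    simp only [key] at hint
    have := hint.const_mul ((((B / A : ℝ) : ℂ) ^ (l / 2))⁻¹)
    simp only [← mul_assoc, inv_mul_cancel₀ hne, one_mul] at this
    exact this
  rw [← himg, integral_image_eq_integral_abs_deriv_smul MeasurableSet.univ hder hinj]
  rw [setIntegral_univ, integral_congr_ae (Filter.Eventually.of_forall key), integral_const_mul, mul_comm (2:ℂ), mul_assoc]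
  congr 1
  rw [← intervalIntegral.integral_Iic_add_Ioi (b := 0) hI.integrableOn hI.integrableOn]
  have h5 := integral_comp_neg_Ioi (0:ℝ) h
  rw [neg_zero] at h5
  rw [← h5, ← integral_add hI.comp_neg.integrableOn hI.integrableOn, besselK,
    ← integral_const_mul]
  refine integral_congr_ae (Filter.Eventually.of_forall fun t => ?_)
  simp only [h, Real.cosh_neg, Complex.cosh]
  push_cast
  ring_nf

lemma natvp_ne_neg {ν : ℂ} (hν : -1 < ν.re) (k : ℕ) : (k : ℂ) + ν + 1 ≠ 0 := by
  intro h
  have := congrArg Complex.re h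
  simp at this
  have hk : (0:ℝ) ≤ k := Nat.cast_nonneg k
  linarith

lemma gamma_k_ne {ν : ℂ} (hν : -1 < ν.re) (k : ℕ) : Complex.Gamma ((k : ℂ) + ν + 1) ≠ 0 := by
  apply Complex.Gamma_ne_zero_of_re_pos
  simp
  have hk : (0:ℝ) ≤ k := Nat.cast_nonneg k
  linarith

lemma gamma_k_succ {ν : ℂ} (hν : -1 < ν.re) (k : ℕ) :
    Complex.Gamma (((k + 1 : ℕ) : ℂ) + ν + 1) =
      ((k : ℂ) + ν + 1) * Complex.Gamma ((k : ℂ) + ν + 1) := by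
  rw [← Complex.Gamma_add_one _ (natvp_ne_neg hν k)]
  congr 1; push_cast; ring

lemma norm_kn_ge {ν : ℂ} (k : ℕ) : (k : ℝ) + ν.re + 1 ≤ ‖(k : ℂ) + ν + 1‖ := by
  have := Complex.re_le_norm ((k : ℂ) + ν + 1)
  simpa using this

lemma gamma_inv_bound {ν : ℂ} (hν : -1 < ν.re) :
    ∃ M : ℝ, 0 ≤ M ∧ ∀ k : ℕ, ‖Complex.Gamma ((k : ℂ) + ν + 1)‖⁻¹ ≤ M := by
  have hmono : ∀ k : ℕ, ‖Complex.Gamma (((k + 1 : ℕ) : ℂ) + ν + 1)‖⁻¹ ≤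
      ‖Complex.Gamma (((0 + 1 : ℕ) : ℂ) + ν + 1)‖⁻¹ := by
    intro k
    induction k with
    | zero => exact le_rfl
    | succ k ih =>
      refine le_trans ?_ ih
      have h0 : 0 < ‖Complex.Gamma (((k + 1 : ℕ) : ℂ) + ν + 1)‖ :=
        norm_pos_iff.2 (gamma_k_ne hν _)
      apply inv_anti₀ h0
      rw [gamma_k_succ hν (k + 1), norm_mul]
      have h1 := norm_kn_ge (ν := ν) (k + 1)
      have hk : (0:ℝ) ≤ k := Nat.cast_nonneg k
      have h2 : 1 ≤ ‖((k + 1 : ℕ) : ℂ) + ν + 1‖ := by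
        refine le_trans ?_ h1
        push_cast; linarith
      nlinarith
  refine ⟨‖Complex.Gamma (((0 : ℕ) : ℂ) + ν + 1)‖⁻¹ +
    ‖Complex.Gamma (((0 + 1 : ℕ) : ℂ) + ν + 1)‖⁻¹, by positivity, fun k => ?_⟩
  cases k with
  | zero => exact le_add_of_nonneg_right (by positivity)
  | succ k => exact (hmono k).trans (le_add_of_nonneg_left (by positivity))

lemma gamma_ratio {ν : ℂ} (hν : -1 < ν.re) (k : ℕ) :
    Real.Gamma (k + ν.re + 1) * ‖Complex.Gamma ((k : ℂ) + ν + 1)‖⁻¹ ≤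
      Real.Gamma (ν.re + 1) * ‖Complex.Gamma (ν + 1)‖⁻¹ := by
  induction k with
  | zero => simp
  | succ k ih =>
    refine le_trans ?_ ih
    have hk : (0:ℝ) ≤ k := Nat.cast_nonneg k
    have hp : 0 < (k : ℝ) + ν.re + 1 := by linarith
    have h1 := norm_kn_ge (ν := ν) k
    have e : Real.Gamma (((k + 1 : ℕ) : ℝ) + ν.re + 1) =
        ((k : ℝ) + ν.re + 1) * Real.Gamma ((k : ℝ) + ν.re + 1) := by
      rw [← Real.Gamma_add_one hp.ne']
      congr 1; push_cast; ring
    rw [gamma_k_succ hν k, norm_mul, e, mul_inv]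
    have h2 : ((k : ℝ) + ν.re + 1) * ‖(k : ℂ) + ν + 1‖⁻¹ ≤ 1 := by
      rw [← div_eq_mul_inv]
      exact div_le_one_of_le₀ h1 (norm_nonneg _)
    have h3 : 0 ≤ Real.Gamma (k + ν.re + 1) * ‖Complex.Gamma ((k : ℂ) + ν + 1)‖⁻¹ :=
      mul_nonneg (Real.Gamma_pos_of_pos hp).le (by positivity)
    calc _ = (((k : ℝ) + ν.re + 1) * ‖(k : ℂ) + ν + 1‖⁻¹) *
        (Real.Gamma (k + ν.re + 1) * ‖Complex.Gamma ((k : ℂ) + ν + 1)‖⁻¹) := by ring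
      _ ≤ _ := mul_le_of_le_one_left h3 h2

def cB (ν : ℂ) (k : ℕ) : ℂ :=
  (-1) ^ k / (Complex.Gamma ((k : ℂ) + 1) * Complex.Gamma ((k : ℂ) + ν + 1))

def gB (ν : ℂ) (x : ℝ) : ℂ := ∑' k : ℕ, cB ν k * ((x : ℂ) / 2) ^ (2 * k)

lemma cB_norm (ν : ℂ) (k : ℕ) :
    ‖cB ν k‖ = (k.factorial : ℝ)⁻¹ * ‖Complex.Gamma ((k : ℂ) + ν + 1)‖⁻¹ := by
  rw [cB, Complex.Gamma_nat_eq_factorial]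
  simp [mul_comm]

lemma gB_summable {ν : ℂ} (hν : -1 < ν.re) (x : ℝ) :
    Summable (fun k : ℕ => cB ν k * ((x : ℂ) / 2) ^ (2 * k)) := by
  obtain ⟨M, hM, h⟩ := gamma_inv_bound hν
  refine Summable.of_norm_bounded (g := fun k : ℕ => M * (((x/2)^2) ^ k / k.factorial))
    ((Real.summable_pow_div_factorial _).mul_left M) fun k => ?_
  rw [norm_mul, cB_norm, norm_pow, pow_mul]
  have : ‖(x : ℂ) / 2‖ ^ 2 = (x / 2) ^ 2 := by
    rw [norm_div, Complex.norm_real]; simp [div_pow]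
  rw [this]
  calc _ = ‖Complex.Gamma ((k : ℂ) + ν + 1)‖⁻¹ * (((x/2)^2) ^ k / k.factorial) := by ring
    _ ≤ _ := by gcongr; exact h k

lemma gB_measurable {ν : ℂ} (hν : -1 < ν.re) : Measurable (gB ν) := by
  refine measurable_of_tendsto_metrizable
    (f := fun n (x : ℝ) => ∑ k ∈ Finset.range n, cB ν k * ((x : ℂ) / 2) ^ (2 * k)) ?_ ?_
  · intro n; fun_prop
  · rw [tendsto_pi_nhds]
    intro x
    exact (gB_summable hν x).hasSum.tendsto_sum_nat

lemma besselJ_eq {ν : ℂ} (x : ℝ) (hx : 0 < x) :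
    besselJ ν x = ((x : ℂ) / 2) ^ ν * gB ν x := by
  rw [besselJ, gB, ← tsum_mul_left]
  refine tsum_congr fun k => ?_
  have hne : ((x : ℂ) / 2) ≠ 0 := by
    simpa using hx.ne'
  rw [Complex.cpow_add _ _ hne, cB]
  have : (2 * (k : ℂ)) = ((2 * k : ℕ) : ℂ) := by push_cast; ring
  rw [this, Complex.cpow_natCast]
  ring

lemma gB_rec {ν : ℂ} (hν : -1 < ν.re) (x : ℝ) :
    gB ν x = (ν + 1) * gB (ν + 1) x - ((x : ℂ) / 2) ^ 2 * gB (ν + 2) x := by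
  have h1 : -1 < (ν + 1).re := by simp; linarith
  have h2 : -1 < (ν + 2).re := by simp; linarith
  have s0 := gB_summable hν x
  have s1 := gB_summable h1 x
  have s2 := gB_summable h2 x
  rw [gB, s0.tsum_eq_zero_add]
  rw [gB, s1.tsum_eq_zero_add, gB, mul_add, ← tsum_mul_left, ← tsum_mul_left, add_sub_assoc]
  rw [← Summable.tsum_sub]
  · congr 1
    · have := gamma_k_succ hν 0
      have hn := natvp_ne_neg hν 0
      have hg := gamma_k_ne hν 0
      simp only [cB]
      push_cast at *
      simp only [zero_add] at *
      rw [show ν + 1 + 1 = 1 + ν + 1 by ring, this]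
      field_simp
    · refine tsum_congr fun k => ?_
      have hn := natvp_ne_neg hν (k + 1)
      have hg := gamma_k_ne hν (k + 1)
      have := gamma_k_succ hν (k + 1)
      have e1 : (((k + 1 : ℕ) : ℂ) + (ν + 1) + 1) = ((k + 1 + 1 : ℕ) : ℂ) + ν + 1 := by
        push_cast; ring
      have e2 : ((k : ℂ) + (ν + 2) + 1) = ((k + 1 + 1 : ℕ) : ℂ) + ν + 1 := by
        push_cast; ring
      simp only [cB]
      rw [e1, e2, this]
      rw [Complex.Gamma_nat_eq_factorial, Complex.Gamma_nat_eq_factorial, Nat.factorial_succ]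
      have hf : (k.factorial : ℂ) ≠ 0 := by exact_mod_cast k.factorial_ne_zero
      have hk : ((k : ℂ) + 1) ≠ 0 := by exact_mod_cast k.succ_ne_zero
      push_cast at *
      field_simp
      ring
  · exact ((summable_nat_add_iff 1).2 s1).mul_left _
  · exact s2.mul_left _

lemma gamma_half_k (k : ℕ) : Complex.Gamma ((k : ℂ) + 1 / 2) * k.factorial * 4 ^ k =
    (2 * k).factorial * ((Real.sqrt Real.pi : ℝ) : ℂ) := by
  have h := Complex.Gamma_mul_Gamma_add_half ((k : ℂ) + 1 / 2)
  have e1 : (k : ℂ) + 1 / 2 + 1 / 2 = k + 1 := by ring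
  have e2 : 2 * ((k : ℂ) + 1 / 2) = ((2 * k : ℕ) : ℂ) + 1 := by push_cast; ring
  have e3 : (1 : ℂ) - (((2 * k : ℕ) : ℂ) + 1) = -((2 * k : ℕ) : ℂ) := by ring
  rw [e1, e2, e3, Complex.Gamma_nat_eq_factorial, Complex.Gamma_nat_eq_factorial,
    Complex.cpow_neg, Complex.cpow_natCast] at h
  rw [h, pow_mul]
  norm_num
  field_simp

lemma gB_bdd {ν : ℂ} (hν : 0 < ν.re) : ∃ C : ℝ, 0 ≤ C ∧ ∀ x : ℝ, ‖gB ν x‖ ≤ C := by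
  let G : ℝ → ℂ := fun s => (s : ℂ) ^ ((1/2 : ℂ) - 1) * (1 - (s : ℂ)) ^ (ν + 1 / 2 - 1)
  have hG : IntegrableOn G (Ioc 0 1) := by
    have := Complex.betaIntegral_convergent (u := 1 / 2) (v := ν + 1 / 2) (by norm_num)
      (by simp; linarith)
    rwa [intervalIntegrable_iff_integrableOn_Ioc_of_le zero_le_one] at this
  set C := ∫ s in Ioc (0:ℝ) 1, ‖G s‖ with hC
  have hC0 : 0 ≤ C := integral_nonneg fun _ => norm_nonneg _
  have hK : ((Real.sqrt Real.pi : ℝ) : ℂ) * Complex.Gamma (ν + 1 / 2) ≠ 0 := by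
    apply mul_ne_zero
    · exact_mod_cast (Real.sqrt_pos.2 Real.pi_pos).ne'
    · apply Complex.Gamma_ne_zero_of_re_pos
      simp; linarith
  set K := ((Real.sqrt Real.pi : ℝ) : ℂ) * Complex.Gamma (ν + 1 / 2) with hKdef
  refine ⟨‖K‖⁻¹ * C, by positivity, fun x => ?_⟩
  let F : ℕ → ℝ → ℂ := fun k s => ((-1) ^ k * (x : ℂ) ^ (2 * k) / (2 * k).factorial) *
    ((s : ℂ) ^ k * G s)
  have hsG : ∀ k : ℕ, IntegrableOn (fun s : ℝ => (s : ℂ) ^ k * G s) (Ioc 0 1) ∧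
      ∫ s in Ioc (0:ℝ) 1, ‖(s : ℂ) ^ k * G s‖ ≤ C := by
    intro k
    have hb : ∀ᵐ (s : ℝ) ∂(volume.restrict (Ioc (0:ℝ) 1)), ‖(s : ℂ) ^ k * G s‖ ≤ ‖G s‖ := by
      refine (ae_restrict_iff' measurableSet_Ioc).2 (Filter.Eventually.of_forall fun s hs => ?_)
      rw [norm_mul, norm_pow, Complex.norm_real, Real.norm_of_nonneg hs.1.le]
      exact mul_le_of_le_one_left (norm_nonneg _) (pow_le_one₀ hs.1.le hs.2)
    have hi : IntegrableOn (fun s : ℝ => (s : ℂ) ^ k * G s) (Ioc 0 1) := by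
      refine Integrable.mono hG ?_ hb
      exact AEStronglyMeasurable.mul (by fun_prop) hG.aestronglyMeasurable
    exact ⟨hi, integral_mono_ae hi.norm hG.norm hb⟩
  have hFi : ∀ k, Integrable (F k) (volume.restrict (Ioc (0:ℝ) 1)) :=
    fun k => (hsG k).1.const_mul _
  have hFn : Summable fun k => ∫ s in Ioc (0:ℝ) 1, ‖F k s‖ := by
    refine Summable.of_nonneg_of_le (fun k => integral_nonneg fun _ => norm_nonneg _)
      (f := fun k : ℕ => (x ^ (2 * k) / (2 * k).factorial) * C) (fun k => ?_)
      ((Real.hasSum_cosh x).summable.mul_right C)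
    simp only [F, norm_mul (_ / _)]
    rw [integral_const_mul]
    have : ‖((-1) ^ k * (x : ℂ) ^ (2 * k) / (2 * k).factorial)‖ =
        x ^ (2 * k) / (2 * k).factorial := by
      rw [norm_div, norm_mul, norm_pow, norm_pow, Complex.norm_real, pow_mul, Real.norm_eq_abs,
        sq_abs, pow_mul]
      simp
    rw [this]
    exact mul_le_mul_of_nonneg_left (hsG k).2 (by rw [pow_mul]; positivity)
  have hsum := hasSum_integral_of_summable_integral_norm hFi hFn
  have hval : ∀ k, ∫ s in Ioc (0:ℝ) 1, F k s = K * (cB ν k * ((x : ℂ) / 2) ^ (2 * k)) := by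
    intro k
    have hbeta := Complex.Gamma_mul_Gamma_eq_betaIntegral (s := (k : ℂ) + 1 / 2) (t := ν + 1 / 2)
      (by simp; positivity) (by simp; linarith)
    have hb2 : ∫ s in Ioc (0:ℝ) 1, (s : ℂ) ^ k * G s =
        Complex.betaIntegral ((k : ℂ) + 1 / 2) (ν + 1 / 2) := by
      rw [Complex.betaIntegral, intervalIntegral.integral_of_le zero_le_one]
      refine setIntegral_congr_fun measurableSet_Ioc fun s hs => ?_
      have hs0 : (s : ℂ) ≠ 0 := by exact_mod_cast hs.1.ne'
      simp only [G]
      rw [← mul_assoc, ← Complex.cpow_natCast, ← Complex.cpow_add _ _ hs0]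
      congr 2; ring
    simp only [F]
    rw [integral_const_mul, hb2]
    have e : (k : ℂ) + 1 / 2 + (ν + 1 / 2) = k + ν + 1 := by ring
    rw [e] at hbeta
    have hg := gamma_k_ne (ν := ν) (by linarith) k
    have hf : (k.factorial : ℂ) ≠ 0 := by exact_mod_cast k.factorial_ne_zero
    have hf2 : ((2 * k).factorial : ℂ) ≠ 0 := by exact_mod_cast (2 * k).factorial_ne_zero
    have hh := gamma_half_k k
    have hbe : Complex.betaIntegral ((k : ℂ) + 1 / 2) (ν + 1 / 2) =
        Complex.Gamma (k + 1 / 2) * Complex.Gamma (ν + 1 / 2) / Complex.Gamma (k + ν + 1) := by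
      rw [hbeta]; field_simp
    have hh2 : Complex.Gamma ((k : ℂ) + 1 / 2) =
      (2 * k).factorial * ((Real.sqrt Real.pi : ℝ) : ℂ) / (k.factorial * 4 ^ k) := by
      rw [← hh]; field_simp
    rw [hbe, hh2, cB, Complex.Gamma_nat_eq_factorial, hKdef, div_pow, pow_mul (2 : ℂ)]
    norm_num
    field_simp
  have hK2 : K * gB ν x = ∫ s in Ioc (0:ℝ) 1, ∑' k, F k s := by
    rw [gB, ← tsum_mul_left, ← hsum.tsum_eq]
    exact tsum_congr fun k => (hval k).symm
  have hle : ‖∫ s in Ioc (0:ℝ) 1, ∑' k, F k s‖ ≤ C := by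
    refine norm_integral_le_of_norm_le hG.norm ?_
    refine (ae_restrict_iff' measurableSet_Ioc).2 (Filter.Eventually.of_forall fun s hs => ?_)
    have hc := Complex.hasSum_cos ((x * Real.sqrt s : ℝ) : ℂ)
    have : ∑' k, F k s = Complex.cos ((x * Real.sqrt s : ℝ) : ℂ) * G s := by
      rw [← hc.tsum_eq, ← tsum_mul_right]
      refine tsum_congr fun k => ?_
      simp only [F]
      have hsq : ((Real.sqrt s : ℝ) : ℂ) ^ (2 * k) = (s : ℂ) ^ k := by
        rw [pow_mul]; norm_cast; rw [Real.sq_sqrt hs.1.le]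
      rw [Complex.ofReal_mul, mul_pow, hsq]
      ring
    rw [this, norm_mul, ← Complex.ofReal_cos, Complex.norm_real]
    exact mul_le_of_le_one_left (norm_nonneg _) (Real.abs_cos_le_one _)
  rw [← hK2, norm_mul] at hle
  rw [inv_mul_eq_div, le_div_iff₀ (norm_pos_iff.2 hK)]
  linarith

lemma gB_bound {ν : ℂ} (hν : -1 < ν.re) :
    ∃ C : ℝ, 0 ≤ C ∧ ∀ x : ℝ, ‖gB ν x‖ ≤ C * (1 + x ^ 2) := by
  obtain ⟨C1, h1, b1⟩ := gB_bdd (ν := ν + 1) (by simp; linarith)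
  obtain ⟨C2, h2, b2⟩ := gB_bdd (ν := ν + 2) (by simp; linarith)
  refine ⟨‖ν + 1‖ * C1 + C2, by positivity, fun x => ?_⟩
  rw [gB_rec hν]
  refine (norm_sub_le _ _).trans ?_
  rw [norm_mul, norm_mul, norm_pow, norm_div, Complex.norm_real, Real.norm_eq_abs, div_pow, sq_abs]
  have e1 : ‖ν + 1‖ * ‖gB (ν + 1) x‖ ≤ ‖ν + 1‖ * C1 := by gcongr; exact b1 x
  have e2 : x ^ 2 / ‖(2:ℂ)‖ ^ 2 * ‖gB (ν + 2) x‖ ≤ x ^ 2 * C2 := by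
    gcongr
    · norm_num; nlinarith [sq_nonneg x]
    · exact b2 x
  have e3 : 0 ≤ ‖ν + 1‖ * C1 * x ^ 2 := by positivity
  nlinarith

lemma gauss_moment {s : ℂ} (hs : 0 < s.re) {p : ℝ} (hp : 0 < p) :
    ∫ x in Ioi (0:ℝ), (x : ℂ) ^ (2 * s - 1) * Complex.exp ((-p * x ^ 2 : ℝ) : ℂ) =
      1 / 2 * (p : ℂ) ^ (-s) * Complex.Gamma s := by
  have h := Complex.integral_cpow_mul_exp_neg_mul_Ioi hs hp
  rw [← integral_comp_rpow_Ioi_of_pos (p := 2) two_pos] at h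
  have e : ∫ x in Ioi (0:ℝ), ((2:ℝ) * x ^ ((2:ℝ) - 1)) • (((x ^ (2:ℝ) : ℝ) : ℂ) ^ (s - 1) *
        Complex.exp (-(p * ((x ^ (2:ℝ) : ℝ) : ℂ)))) =
      2 * ∫ x in Ioi (0:ℝ), (x : ℂ) ^ (2 * s - 1) * Complex.exp ((-p * x ^ 2 : ℝ) : ℂ) := by
    rw [← integral_const_mul]
    refine setIntegral_congr_fun measurableSet_Ioi fun x hx => ?_
    have hx : 0 < x := hx
    have hx0 : (x : ℂ) ≠ 0 := by exact_mod_cast hx.ne'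
    have e1 : ((x ^ 2 : ℝ) : ℂ) ^ (s - 1) * x = (x : ℂ) ^ (2 * s - 1) := by
      rw [pow_two, Complex.ofReal_mul, Complex.mul_cpow_ofReal_nonneg hx.le hx.le,
        ← Complex.cpow_add _ _ hx0]
      nth_rewrite 2 [← Complex.cpow_one (x : ℂ)]
      rw [← Complex.cpow_add _ _ hx0]
      congr 1; ring
    simp only [Real.rpow_two, Complex.real_smul]
    norm_num
    rw [← e1]
    push_cast
    ring
  have h2 : (p : ℂ) ^ (-s) = (1 / (p : ℂ)) ^ s := by
    rw [Complex.cpow_neg, one_div, Complex.inv_cpow]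
    rw [Complex.arg_ofReal_of_nonneg hp.le]
    exact Real.pi_pos.ne
  rw [e] at h
  rw [h2]
  linear_combination h / 2

lemma gauss_norm (s : ℂ) (x p : ℝ) (hx : 0 < x) :
    ‖(x : ℂ) ^ (2 * s - 1) * Complex.exp ((-p * x ^ 2 : ℝ) : ℂ)‖ =
      x ^ (2 * s.re - 1) * Real.exp (-p * x ^ (2:ℝ)) := by
  rw [norm_mul, Complex.norm_cpow_eq_rpow_re_of_pos hx, Complex.norm_exp, Complex.ofReal_re]
  simp

lemma gauss_norm_integral {s : ℂ} (hs : 0 < s.re) {p : ℝ} (hp : 0 < p) :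
    ∫ x in Ioi (0:ℝ), ‖(x : ℂ) ^ (2 * s - 1) * Complex.exp ((-p * x ^ 2 : ℝ) : ℂ)‖ =
      1 / 2 * p ^ (-s.re) * Real.Gamma s.re := by
  rw [setIntegral_congr_fun measurableSet_Ioi (fun x hx => gauss_norm s x p hx),
    integral_rpow_mul_exp_neg_mul_rpow two_pos (by linarith) hp]
  have e1 : -(2 * s.re - 1 + 1) / 2 = - s.re := by ring
  have e2 : (2 * s.re - 1 + 1) / 2 = s.re := by ring
  rw [e1, e2]; ring

lemma gauss_integrable {s : ℂ} (hs : 0 < s.re) {p : ℝ} (hp : 0 < p) :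
    IntegrableOn (fun x : ℝ => (x : ℂ) ^ (2 * s - 1) * Complex.exp ((-p * x ^ 2 : ℝ) : ℂ))
      (Ioi 0) := by
  refine Integrable.mono' (integrableOn_rpow_mul_exp_neg_mul_rpow (p := 2) (s := 2 * s.re - 1)
    (b := p) (by linarith) two_pos hp) ?_ ?_
  · exact Measurable.aestronglyMeasurable (by fun_prop)
  · refine (ae_restrict_iff' measurableSet_Ioi).2 (Filter.Eventually.of_forall fun x hx => ?_)
    exact (gauss_norm s x p hx).le

lemma gauss_gB {ν : ℂ} (hν : -1 < ν.re) {p : ℝ} (hp : 0 < p) (y : ℝ) (hy : 0 < y) :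
    ∫ x in Ioi (0:ℝ), (x : ℂ) ^ (2 * ν + 1) * gB ν (x * y) *
      Complex.exp ((-p * x ^ 2 : ℝ) : ℂ) =
      1 / 2 * (p : ℂ) ^ (-ν - 1) * Complex.exp ((-(y ^ 2 / (4 * p)) : ℝ) : ℂ) := by
  have hs : ∀ k : ℕ, 0 < ((k : ℂ) + ν + 1).re := by
    intro k
    have hk : (0:ℝ) ≤ k := Nat.cast_nonneg k
    simp; linarith
  have hp0 : (p : ℂ) ≠ 0 := by exact_mod_cast hp.ne'
  let F : ℕ → ℝ → ℂ := fun k x => (cB ν k * ((y : ℂ) / 2) ^ (2 * k)) *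
    ((x : ℂ) ^ (2 * ((k : ℂ) + ν + 1) - 1) * Complex.exp ((-p * x ^ 2 : ℝ) : ℂ))
  have hFi : ∀ k, Integrable (F k) (volume.restrict (Ioi (0:ℝ))) :=
    fun k => (gauss_integrable (hs k) hp).const_mul _
  have hFn : Summable fun k => ∫ x in Ioi (0:ℝ), ‖F k x‖ := by
    set R := Real.Gamma (ν.re + 1) * ‖Complex.Gamma (ν + 1)‖⁻¹
    refine Summable.of_nonneg_of_le (fun k => integral_nonneg fun _ => norm_nonneg _)
      (f := fun k : ℕ => (1 / 2 * p ^ (-(ν.re + 1)) * R) *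
        (((y / 2) ^ 2 / p) ^ k / k.factorial)) (fun k => ?_)
      ((Real.summable_pow_div_factorial _).mul_left _)
    simp only [F, norm_mul (_ * _)]
    rw [integral_const_mul, gauss_norm_integral (hs k) hp, norm_mul, cB_norm, norm_pow, norm_div,
      Complex.norm_real, Real.norm_of_nonneg hy.le]
    have hr := gamma_ratio hν k
    have e : p ^ (-((k : ℂ) + ν + 1).re) = p ^ (-(ν.re + 1)) * (p⁻¹) ^ k := by
      have : -((k : ℂ) + ν + 1).re = -(ν.re + 1) + -(k : ℝ) := by simp; ring
      rw [this, Real.rpow_add hp, Real.rpow_neg hp.le (k : ℝ), Real.rpow_natCast, inv_pow]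
    have e' : ((k : ℂ) + ν + 1).re = k + ν.re + 1 := by simp
    have n2 : ‖(2:ℂ)‖ = 2 := by norm_num
    rw [e, e', n2]
    calc _ = (1 / 2 * p ^ (-(ν.re + 1)) * (((y / 2) ^ 2 / p) ^ k / k.factorial)) *
          (Real.Gamma (k + ν.re + 1) * ‖Complex.Gamma ((k : ℂ) + ν + 1)‖⁻¹) := by
          rw [div_pow _ p, ← pow_mul, inv_pow]
          ring
      _ ≤ (1 / 2 * p ^ (-(ν.re + 1)) * (((y / 2) ^ 2 / p) ^ k / k.factorial)) * R := by
          gcongr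
      _ = _ := by ring
  have hsum := hasSum_integral_of_summable_integral_norm hFi hFn
  have hL : ∫ x in Ioi (0:ℝ), (x : ℂ) ^ (2 * ν + 1) * gB ν (x * y) *
      Complex.exp ((-p * x ^ 2 : ℝ) : ℂ) = ∫ x in Ioi (0:ℝ), ∑' k, F k x := by
    refine setIntegral_congr_fun measurableSet_Ioi fun x hx => ?_
    have hx : 0 < x := hx
    have hx0 : (x : ℂ) ≠ 0 := by exact_mod_cast hx.ne'
    simp only [gB]
    rw [← tsum_mul_left, ← tsum_mul_right]
    refine tsum_congr fun k => ?_
    simp only [F]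
    have e1 : 2 * ((k : ℂ) + ν + 1) - 1 = (2 * ν + 1) + ((2 * k : ℕ) : ℂ) := by
      push_cast; ring
    rw [e1, Complex.cpow_add (2 * ν + 1) _ hx0, Complex.cpow_natCast, Complex.ofReal_mul, mul_div_assoc,
      mul_pow]
    ring
  rw [hL, ← hsum.tsum_eq, Complex.ofReal_exp _ |>.symm.trans (Complex.ofReal_exp _),
    Complex.exp_eq_exp_ℂ, NormedSpace.exp_eq_tsum_div, ← tsum_mul_left]
  refine tsum_congr fun k => ?_
  simp only [F]
  rw [integral_const_mul, gauss_moment (hs k) hp, cB, Complex.Gamma_nat_eq_factorial]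
  have hg := gamma_k_ne hν k
  have hf : (k.factorial : ℂ) ≠ 0 := by exact_mod_cast k.factorial_ne_zero
  have e1 : -((k : ℂ) + ν + 1) = (-ν - 1) + -(k : ℂ) := by ring
  rw [e1, Complex.cpow_add _ _ hp0, Complex.cpow_neg, Complex.cpow_natCast]
  push_cast
  rw [neg_pow ((y : ℂ) ^ 2 / (4 * p)), div_pow, div_pow, mul_pow, ← pow_mul, pow_mul 2 2 k]
  norm_num
  field_simp

lemma H_eq {ν : ℂ} (x y : ℝ) (hx : 0 < x) (hy : 0 < y) :
    (x : ℂ) ^ (ν + 1 / 2) * besselJ ν (x * y) * ((Real.sqrt (x * y) : ℝ) : ℂ) =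
      (y : ℂ) ^ (ν + 1 / 2) * (2 : ℂ) ^ (-ν) * ((x : ℂ) ^ (2 * ν + 1) * gB ν (x * y)) := by
  have hx0 : (x : ℂ) ≠ 0 := by exact_mod_cast hx.ne'
  have hy0 : (y : ℂ) ≠ 0 := by exact_mod_cast hy.ne'
  rw [besselJ_eq _ (mul_pos hx hy), Real.sqrt_eq_rpow, Complex.ofReal_cpow (by positivity)]
  have e1 : (((x * y : ℝ) : ℂ) / 2) ^ ν = (x : ℂ) ^ ν * (y : ℂ) ^ ν * (2 : ℂ) ^ (-ν) := by
    have : (((x * y : ℝ) : ℂ) / 2) = ((x * y : ℝ) : ℂ) * ((2⁻¹ : ℝ) : ℂ) := by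
      push_cast; ring
    rw [this, Complex.mul_cpow_ofReal_nonneg (by positivity) (by positivity), Complex.ofReal_mul,
      Complex.mul_cpow_ofReal_nonneg hx.le hy.le, Complex.ofReal_inv, Complex.cpow_neg,
      Complex.inv_cpow]
    · norm_num
    · rw [Complex.arg_ofReal_of_nonneg (by norm_num)]; exact Real.pi_pos.ne
  rw [e1, Complex.ofReal_mul, Complex.mul_cpow_ofReal_nonneg hx.le hy.le]
  have e2 : (x : ℂ) ^ (2 * ν + 1) = (x : ℂ) ^ (ν + 1 / 2) * (x : ℂ) ^ ν * (x : ℂ) ^ ((1 / 2 : ℝ) : ℂ) := by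
    rw [← Complex.cpow_add _ _ hx0, ← Complex.cpow_add _ _ hx0]
    congr 1; push_cast; ring
  have e3 : (y : ℂ) ^ (ν + 1 / 2) = (y : ℂ) ^ ν * (y : ℂ) ^ ((1 / 2 : ℝ) : ℂ) := by
    rw [← Complex.cpow_add _ _ hy0]
    congr 1; push_cast; ring
  rw [e2, e3]; ring

lemma x_bound_integrable (σ y c : ℝ) (hσ : -1 < σ) (hc : 0 < c) :
    IntegrableOn (fun x : ℝ => x ^ (2 * σ + 1) * (1 + (x * y) ^ 2) * Real.exp (-c * x)) (Ioi 0) := by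
  have h1 := integrableOn_rpow_mul_exp_neg_mul_rpow (p := 1) (s := 2 * σ + 1) (b := c)
    (by linarith) one_pos hc
  have h2 := integrableOn_rpow_mul_exp_neg_mul_rpow (p := 1) (s := 2 * σ + 1 + 2) (b := c)
    (by linarith) one_pos hc
  refine (h1.add (h2.const_mul (y ^ 2))).congr_fun (fun x hx => ?_) measurableSet_Ioi
  have hx : 0 < x := hx
  simp only [Pi.add_apply, Real.rpow_one]
  rw [Real.rpow_add hx _ 2, Real.rpow_two]
  ring

/-- a Hankel-type integral formula
(Erdélyi, *Tables of Integral Transforms* II, 8.14 (35)). -/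
theorem stmt13 (y a b : ℝ) (hy : 0 < y) (ha : 0 < a) (hb : 0 < b) (μ ν : ℂ)
    (hν : -1 < ν.re) :
    (∫ x in Set.Ioi (0 : ℝ),
        (x : ℂ) ^ (ν + 1 / 2) * ((x ^ 2 + b ^ 2 : ℝ) : ℂ) ^ (-μ / 2) *
          besselK μ ((a * Real.sqrt (x ^ 2 + b ^ 2) : ℝ) : ℂ) *
          besselJ ν (x * y) * ((Real.sqrt (x * y) : ℝ) : ℂ))
      = (a : ℂ) ^ (-μ) * (b : ℂ) ^ (ν + 1 - μ) * (y : ℂ) ^ (ν + 1 / 2) *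
          ((a ^ 2 + y ^ 2 : ℝ) : ℂ) ^ ((μ - ν - 1) / 2) *
          besselK (μ - ν - 1) ((b * Real.sqrt (a ^ 2 + y ^ 2) : ℝ) : ℂ) := by
  have hb2 : 0 < b ^ 2 := by positivity
  let D : ℂ := (y : ℂ) ^ (ν + 1 / 2) * (2 : ℂ) ^ (-ν)
  let F : ℝ → ℝ → ℂ := fun x τ => D * ((x : ℂ) ^ (2 * ν + 1) * gB ν (x * y)) *
    (1 / 2 * ((τ : ℂ) ^ (μ - 1) *
      Complex.exp ((-(a * (x ^ 2 + b ^ 2) / 2) * τ - (a / 2) / τ : ℝ) : ℂ)))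
  have hL : ∀ x ∈ Ioi (0:ℝ), (x : ℂ) ^ (ν + 1 / 2) * ((x ^ 2 + b ^ 2 : ℝ) : ℂ) ^ (-μ / 2) *
          besselK μ ((a * Real.sqrt (x ^ 2 + b ^ 2) : ℝ) : ℂ) *
          besselJ ν (x * y) * ((Real.sqrt (x * y) : ℝ) : ℂ) = ∫ τ in Ioi (0:ℝ), F x τ := by
    intro x hx
    have hx : 0 < x := hx
    simp only [F]
    have hS : 0 < x ^ 2 + b ^ 2 := by positivity
    rw [integral_const_mul, integral_const_mul, tau_integral μ _ _ (by positivity) (by positivity)]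
    have e1 : 2 * Real.sqrt (a * (x ^ 2 + b ^ 2) / 2 * (a / 2)) =
        a * Real.sqrt (x ^ 2 + b ^ 2) := by
      have : a * (x ^ 2 + b ^ 2) / 2 * (a / 2) = (a / 2) ^ 2 * (x ^ 2 + b ^ 2) := by ring
      rw [this, Real.sqrt_mul (by positivity), Real.sqrt_sq (by positivity)]
      ring
    have e2 : a / 2 / (a * (x ^ 2 + b ^ 2) / 2) = (x ^ 2 + b ^ 2)⁻¹ := by
      field_simp
    have e3 : (((x ^ 2 + b ^ 2)⁻¹ : ℝ) : ℂ) ^ (μ / 2) =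
        ((x ^ 2 + b ^ 2 : ℝ) : ℂ) ^ (-μ / 2) := by
      rw [neg_div, Complex.cpow_neg, Complex.ofReal_inv, Complex.inv_cpow]
      rw [Complex.arg_ofReal_of_nonneg hS.le]; exact Real.pi_pos.ne
    rw [e1, e2, e3]
    have := H_eq (ν := ν) x y hx hy
    simp only [D]
    linear_combination (((x ^ 2 + b ^ 2 : ℝ) : ℂ) ^ (-μ / 2) *
          besselK μ ((a * Real.sqrt (x ^ 2 + b ^ 2) : ℝ) : ℂ)) * this
  rw [setIntegral_congr_fun measurableSet_Ioi hL]
  have hFint : Integrable (Function.uncurry F)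
      ((volume.restrict (Ioi (0:ℝ))).prod (volume.restrict (Ioi (0:ℝ)))) := by
    obtain ⟨C, hC, hg⟩ := gB_bound hν
    have h1 := x_bound_integrable ν.re y (a / 2) hν (by positivity)
    have h2 := tau_real_integrable (μ.re - 1) (a * b ^ 2 / 2) (a / 4) (by positivity)
      (by positivity)
    have h3 := (Integrable.mul_prod h1 h2).const_mul (‖D‖ * C * (1 / 2))
    refine Integrable.mono' h3 ?_ ?_
    · have hm : Measurable (fun z : ℝ × ℝ => gB ν (z.1 * y)) :=
        (gB_measurable hν).comp (by fun_prop)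
      have : Measurable (Function.uncurry F) := by
        simp only [F, Function.uncurry_def]
        refine Measurable.mul ?_ ?_
        · exact Measurable.mul (by fun_prop) (Measurable.mul (by fun_prop) hm)
        · fun_prop
      exact this.aestronglyMeasurable
    · rw [Measure.prod_restrict]
      refine (ae_restrict_iff' (measurableSet_Ioi.prod measurableSet_Ioi)).2
        (Filter.Eventually.of_forall ?_)
      rintro ⟨x, τ⟩ ⟨hx, hτ⟩
      have hx : 0 < x := hx
      have hτ : 0 < τ := hτ
      simp only [Function.uncurry_apply_pair, F]
      rw [norm_mul, norm_mul D, norm_mul ((x : ℂ) ^ _), norm_mul (1 / 2 : ℂ), tau_norm μ _ _ τ hτ,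
        Complex.norm_cpow_eq_rpow_re_of_pos hx]
      have n1 : ‖(1 / 2 : ℂ)‖ = 1 / 2 := by norm_num
      have n2 : (2 * ν + 1).re = 2 * ν.re + 1 := by simp
      rw [n1, n2]
      have hexp : Real.exp (-(a * (x ^ 2 + b ^ 2) / 2) * τ - a / 2 / τ) ≤
          Real.exp (-(a / 2) * x) * Real.exp (-(a * b ^ 2 / 2) * τ - a / 4 / τ) := by
        rw [← Real.exp_add]
        apply Real.exp_le_exp.2
        have : (-(a / 2) * x + (-(a * b ^ 2 / 2) * τ - a / 4 / τ)) -
            (-(a * (x ^ 2 + b ^ 2) / 2) * τ - a / 2 / τ) =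
            a / (4 * τ) * ((x * τ - 1) ^ 2 + (x * τ) ^ 2) := by
          field_simp; ring
        have h0 : 0 ≤ a / (4 * τ) * ((x * τ - 1) ^ 2 + (x * τ) ^ 2) := by positivity
        linarith
      calc _ ≤ ‖D‖ * (x ^ (2 * ν.re + 1) * (C * (1 + (x * y) ^ 2))) *
          (1 / 2 * (τ ^ (μ.re - 1) * (Real.exp (-(a / 2) * x) *
            Real.exp (-(a * b ^ 2 / 2) * τ - a / 4 / τ)))) := by
            gcongr
            exact hg _
        _ = _ := by ring
  rw [integral_integral_swap hFint]
  have ha0 : (a : ℂ) ≠ 0 := by exact_mod_cast ha.ne'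
  have hR : ∀ τ ∈ Ioi (0:ℝ), ∫ x in Ioi (0:ℝ), F x τ =
      (1 / 2 * (y : ℂ) ^ (ν + 1 / 2) * (a : ℂ) ^ (-ν - 1)) * ((τ : ℂ) ^ ((μ - ν - 1) - 1) *
      Complex.exp ((-(a * b ^ 2 / 2) * τ - ((a ^ 2 + y ^ 2) / (2 * a)) / τ : ℝ) : ℂ)) := by
    intro τ hτ
    have hτ : 0 < τ := hτ
    have hτ0 : (τ : ℂ) ≠ 0 := by exact_mod_cast hτ.ne'
    have hp : 0 < a * τ / 2 := by positivity
    have hF : ∀ x, F x τ = (D * (1 / 2) * (τ : ℂ) ^ (μ - 1) *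
        Complex.exp ((-(a * b ^ 2 / 2) * τ - a / 2 / τ : ℝ) : ℂ)) *
        ((x : ℂ) ^ (2 * ν + 1) * gB ν (x * y) *
          Complex.exp ((-(a * τ / 2) * x ^ 2 : ℝ) : ℂ)) := by
      intro x
      simp only [F]
      have : (-(a * (x ^ 2 + b ^ 2) / 2) * τ - (a / 2) / τ : ℝ) =
        (-(a * b ^ 2 / 2) * τ - a / 2 / τ) + (-(a * τ / 2) * x ^ 2) := by ring
      rw [this, Complex.ofReal_add, Complex.exp_add]
      ring
    simp only [hF]
    rw [integral_const_mul, gauss_gB hν hp y hy]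
    have e1 : ((a * τ / 2 : ℝ) : ℂ) ^ (-ν - 1) =
        (a : ℂ) ^ (-ν - 1) * (τ : ℂ) ^ (-ν - 1) * (2 : ℂ) ^ (ν + 1) := by
      have : a * τ / 2 = a * τ * 2⁻¹ := by ring
      rw [this, Complex.ofReal_mul, Complex.mul_cpow_ofReal_nonneg (by positivity) (by positivity),
        Complex.ofReal_mul, Complex.mul_cpow_ofReal_nonneg ha.le hτ.le, Complex.ofReal_inv,
        Complex.inv_cpow, ← Complex.cpow_neg]
      · congr 2
        ring
      · rw [Complex.arg_ofReal_of_nonneg (by norm_num)]; exact Real.pi_pos.ne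
    have e2 : (2 : ℂ) ^ (-ν) * (2 : ℂ) ^ (ν + 1) = 2 := by
      rw [← Complex.cpow_add _ _ two_ne_zero]
      simp
    have e3 : (τ : ℂ) ^ ((μ - ν - 1) - 1) = (τ : ℂ) ^ (μ - 1) * (τ : ℂ) ^ (-ν - 1) := by
      rw [← Complex.cpow_add _ _ hτ0]
      congr 1; ring
    have e4 : (-(a * b ^ 2 / 2) * τ - ((a ^ 2 + y ^ 2) / (2 * a)) / τ : ℝ) =
        (-(a * b ^ 2 / 2) * τ - a / 2 / τ) + -(y ^ 2 / (4 * (a * τ / 2))) := by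
      field_simp; ring
    rw [e1, e3, e4, Complex.ofReal_add, Complex.exp_add]
    simp only [D]
    linear_combination ((1 / 4) * (y : ℂ) ^ (ν + 1 / 2) * (a : ℂ) ^ (-ν - 1) *
      (τ : ℂ) ^ (μ - 1) * (τ : ℂ) ^ (-ν - 1) *
      Complex.exp ((-(a * b ^ 2 / 2) * τ - a / 2 / τ : ℝ) : ℂ) *
      Complex.exp ((-(y ^ 2 / (4 * (a * τ / 2))) : ℝ) : ℂ)) * e2
  rw [setIntegral_congr_fun measurableSet_Ioi hR, integral_const_mul,
    tau_integral _ _ _ (by positivity) (by positivity)]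
  have e1 : 2 * Real.sqrt (a * b ^ 2 / 2 * ((a ^ 2 + y ^ 2) / (2 * a))) =
      b * Real.sqrt (a ^ 2 + y ^ 2) := by
    have : a * b ^ 2 / 2 * ((a ^ 2 + y ^ 2) / (2 * a)) = (b / 2) ^ 2 * (a ^ 2 + y ^ 2) := by
      field_simp
    rw [this, Real.sqrt_mul (by positivity), Real.sqrt_sq (by positivity)]
    ring
  have hab : 0 < a * b := by positivity
  have e2 : (((a ^ 2 + y ^ 2) / (2 * a) / (a * b ^ 2 / 2) : ℝ) : ℂ) ^ ((μ - ν - 1) / 2) =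
      ((a ^ 2 + y ^ 2 : ℝ) : ℂ) ^ ((μ - ν - 1) / 2) * ((a : ℂ) ^ (-(μ - ν - 1)) *
        (b : ℂ) ^ (-(μ - ν - 1))) := by
    have : (a ^ 2 + y ^ 2) / (2 * a) / (a * b ^ 2 / 2) =
        (a ^ 2 + y ^ 2) * ((a * b)⁻¹ * (a * b)⁻¹) := by
      field_simp
    have hab0 : (((a * b)⁻¹ : ℝ) : ℂ) ≠ 0 := by exact_mod_cast (inv_pos.2 hab).ne'
    rw [this, Complex.ofReal_mul, Complex.mul_cpow_ofReal_nonneg (by positivity) (by positivity),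
      Complex.ofReal_mul, Complex.mul_cpow_ofReal_nonneg (by positivity) (by positivity),
      ← Complex.cpow_add _ _ hab0, add_halves, Complex.ofReal_inv, Complex.inv_cpow,
      ← Complex.cpow_neg, Complex.ofReal_mul, Complex.mul_cpow_ofReal_nonneg ha.le hb.le]
    rw [Complex.arg_ofReal_of_nonneg hab.le]; exact Real.pi_pos.ne
  have e3 : (a : ℂ) ^ (-μ) = (a : ℂ) ^ (-ν - 1) * (a : ℂ) ^ (-(μ - ν - 1)) := by
    rw [← Complex.cpow_add _ _ ha0]
    congr 1; ring
  have e4 : ν + 1 - μ = -(μ - ν - 1) := by ring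
  rw [e1, e2, e3, e4]
  ring
end
end

section
/- Let ν ∈ ℂ and let x₀ > 0 be real. Define φ : (0, ∞) → ℂ by φ(y) = (x₀/y)^ν · K_ν(x₀ y), the power (x₀/y)^ν being the principal complex power of a positive real number. Then φ is twice differentiable on (0, ∞) and for every y > 0: φ''(y) + ((1 + 2ν)/y) · φ'(y) − x₀² · φ(y) = 0. -/
noncomputable section

/-- `φ(y) = (x₀/y)^ν K_ν(x₀ y)`. -/
def phiEF (ν : ℂ) (x₀ : ℝ) (y : ℝ) : ℂ :=
  ((x₀ / y : ℝ) : ℂ) ^ ν * besselK ν ((x₀ * y : ℝ) : ℂ)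

/-- Integrand with an extra power of `cosh t`. -/
def bI (ν : ℂ) (n : ℕ) (s t : ℝ) : ℂ :=
  Complex.exp (-(s : ℂ) * (Real.cosh t : ℂ)) * (Real.cosh t : ℂ) ^ n * Complex.cosh (ν * (t : ℂ))

/-- Moments. -/
def bK (ν : ℂ) (n : ℕ) (s : ℝ) : ℂ := ∫ t in Set.Ioi (0:ℝ), bI ν n s t

lemma exp_decay (δ a : ℝ) (hδ : 0 < δ) :
    ∃ C : ℝ, ∀ t : ℝ, 0 ≤ t → Real.exp (-δ * Real.cosh t) * Real.exp (a * t) ≤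
      C * Real.exp (-t) := by
  refine ⟨Real.exp ((a + 1) ^ 2 / δ), fun t ht => ?_⟩
  rw [← Real.exp_add, ← Real.exp_add]
  apply Real.exp_le_exp.mpr
  have h1 := Real.quadratic_le_exp_of_nonneg ht
  have h2 : t ^ 2 / 4 ≤ Real.cosh t := by
    rw [Real.cosh_eq]
    have := Real.exp_pos (-t)
    nlinarith [sq_nonneg t]
  have h3 : δ * (t ^ 2 / 4) ≤ δ * Real.cosh t := mul_le_mul_of_nonneg_left h2 hδ.le
  have h4 : (a + 1) * t ≤ (a + 1) ^ 2 / δ + δ * (t ^ 2 / 4) := by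
    have : (a + 1) ^ 2 / δ + δ * (t ^ 2 / 4) - (a + 1) * t = ((a + 1) - δ * t / 2) ^ 2 / δ := by
      field_simp
      ring
    have : 0 ≤ ((a + 1) - δ * t / 2) ^ 2 / δ := by positivity
    linarith
  linarith

lemma cosh_le_exp' (t : ℝ) (ht : 0 ≤ t) : Real.cosh t ≤ Real.exp t := by
  rw [Real.cosh_eq]
  have : Real.exp (-t) ≤ Real.exp t := Real.exp_le_exp.mpr (by linarith)
  linarith

lemma norm_exp_le (ν : ℂ) (t : ℝ) (ht : 0 ≤ t) :
    ‖Complex.exp (ν * t)‖ ≤ Real.exp (‖ν‖ * t) ∧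
    ‖Complex.exp (-(ν * t))‖ ≤ Real.exp (‖ν‖ * t) := by
  have h : ‖ν * (t : ℂ)‖ = ‖ν‖ * t := by
    rw [norm_mul, Complex.norm_real, Real.norm_of_nonneg ht]
  constructor
  · rw [← h]; exact Complex.norm_exp_le_exp_norm _
  · rw [← h, ← norm_neg (ν * (t:ℂ))]; exact Complex.norm_exp_le_exp_norm _

lemma norm_cosh_le (ν : ℂ) (t : ℝ) (ht : 0 ≤ t) :
    ‖Complex.cosh (ν * t)‖ ≤ Real.exp (‖ν‖ * t) := by
  obtain ⟨h1, h2⟩ := norm_exp_le ν t ht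
  rw [Complex.cosh, norm_div]
  have := norm_add_le (Complex.exp (ν * t)) (Complex.exp (-(ν * t)))
  simp only [Complex.norm_ofNat]
  linarith

lemma norm_sinh_le (ν : ℂ) (t : ℝ) (ht : 0 ≤ t) :
    ‖Complex.sinh (ν * t)‖ ≤ Real.exp (‖ν‖ * t) := by
  obtain ⟨h1, h2⟩ := norm_exp_le ν t ht
  rw [Complex.sinh, norm_div]
  have := norm_sub_le (Complex.exp (ν * t)) (Complex.exp (-(ν * t)))
  simp only [Complex.norm_ofNat]
  linarith

lemma norm_E (s t : ℝ) :
    ‖Complex.exp (-(s : ℂ) * (Real.cosh t : ℂ))‖ = Real.exp (-s * Real.cosh t) := by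
  rw [← Complex.ofReal_neg, ← Complex.ofReal_mul, ← Complex.ofReal_exp, Complex.norm_real,
    Real.norm_of_nonneg (Real.exp_pos _).le]

lemma bI_bound (ν : ℂ) (n : ℕ) (δ : ℝ) (hδ : 0 < δ) :
    ∃ C : ℝ, ∀ t : ℝ, 0 ≤ t → ∀ s : ℝ, δ ≤ s → ‖bI ν n s t‖ ≤ C * Real.exp (-t) := by
  obtain ⟨C, hC⟩ := exp_decay δ (n + ‖ν‖) hδ
  refine ⟨C, fun t ht s hs => le_trans ?_ (hC t ht)⟩
  have hc := Real.cosh_pos t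
  rw [bI, norm_mul, norm_mul, norm_E, norm_pow, Complex.norm_real, Real.norm_of_nonneg hc.le,
    add_mul, Real.exp_add, ← mul_assoc, Real.exp_nat_mul]
  have := norm_cosh_le ν t ht
  have := cosh_le_exp' t ht
  gcongr

lemma bI_cont (ν : ℂ) (n : ℕ) (s : ℝ) : Continuous (bI ν n s) := by
  unfold bI
  have : Continuous fun t : ℝ => Complex.cosh (ν * t) :=
    Complex.continuous_cosh.comp (by fun_prop)
  have : Continuous fun t : ℝ => Real.cosh t := Real.continuous_cosh
  fun_prop

lemma decay_integrable (C : ℝ) :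
    MeasureTheory.Integrable (fun t : ℝ => C * Real.exp (-t))
      (MeasureTheory.volume.restrict (Set.Ioi 0)) :=
  (integrableOn_exp_neg_Ioi 0).const_mul C

lemma bI_integrable (ν : ℂ) (n : ℕ) (s : ℝ) (hs : 0 < s) :
    MeasureTheory.Integrable (bI ν n s) (MeasureTheory.volume.restrict (Set.Ioi 0)) := by
  obtain ⟨C, hC⟩ := bI_bound ν n s hs
  refine (decay_integrable C).mono' (bI_cont ν n s).aestronglyMeasurable ?_
  filter_upwards [MeasureTheory.ae_restrict_mem measurableSet_Ioi] with t ht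
  exact hC t (le_of_lt ht) s le_rfl

lemma bK_hasDerivAt (ν : ℂ) (n : ℕ) (s : ℝ) (hs : 0 < s) :
    HasDerivAt (bK ν n) (-bK ν (n + 1) s) s := by
  obtain ⟨C, hC⟩ := bI_bound ν (n + 1) (s / 2) (by linarith)
  have key := (hasDerivAt_integral_of_dominated_loc_of_deriv_le
    (μ := MeasureTheory.volume.restrict (Set.Ioi (0:ℝ))) (F := fun s t => bI ν n s t)
    (F' := fun s t => -bI ν (n + 1) s t) (x₀ := s) (s := Set.Ioi (s / 2))
    (bound := fun t => C * Real.exp (-t))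
    (Ioi_mem_nhds (by linarith))
    (Filter.Eventually.of_forall fun x => (bI_cont ν n x).aestronglyMeasurable)
    (bI_integrable ν n s hs)
    (bI_cont ν (n + 1) s).neg.aestronglyMeasurable ?_ (decay_integrable C) ?_).2
  · rw [MeasureTheory.integral_neg] at key
    exact key
  · filter_upwards [MeasureTheory.ae_restrict_mem measurableSet_Ioi] with t ht x hx
    rw [norm_neg]
    exact hC t (le_of_lt ht) x (le_of_lt hx)
  · refine Filter.Eventually.of_forall fun t x _ => ?_
    have h0 : HasDerivAt (fun x : ℝ => -(x : ℂ) * (Real.cosh t : ℂ)) (-1 * (Real.cosh t : ℂ)) x :=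
      (Complex.ofRealCLM.hasDerivAt (x := x)).neg.mul_const _
    have h1 := (h0.cexp.mul_const ((Real.cosh t : ℂ) ^ n)).mul_const (Complex.cosh (ν * (t : ℂ)))
    refine h1.congr_deriv ?_
    simp only [bI]
    ring

/-- Boundary term. -/
def bF (ν : ℂ) (s t : ℝ) : ℂ :=
  Complex.exp (-(s : ℂ) * (Real.cosh t : ℂ)) *
    (s * (Real.sinh t : ℂ) * Complex.cosh (ν * (t : ℂ)) + ν * Complex.sinh (ν * (t : ℂ)))

lemma bF_deriv (ν : ℂ) (s t : ℝ) :
    HasDerivAt (bF ν s) (-(s:ℂ) ^ 2 * bI ν 2 s t + s * bI ν 1 s t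
      + ((s:ℂ) ^ 2 + ν ^ 2) * bI ν 0 s t) t := by
  have hc := (Real.hasDerivAt_cosh t).ofReal_comp
  have hsn := (Real.hasDerivAt_sinh t).ofReal_comp
  have hl : HasDerivAt (fun t : ℝ => ν * (t : ℂ)) ν t := by
    simpa using (Complex.ofRealCLM.hasDerivAt (x := t)).const_mul ν
  have hcn := (Complex.hasDerivAt_cosh (ν * t)).comp t hl
  have hsn' := (Complex.hasDerivAt_sinh (ν * t)).comp t hl
  have h := ((hc.const_mul (-(s:ℂ))).cexp).mul
    (((hsn.const_mul (s:ℂ)).mul hcn).add (hsn'.const_mul ν))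
  have e : (Real.cosh t : ℂ) ^ 2 = (Real.sinh t : ℂ) ^ 2 + 1 := by
    have := Real.cosh_sq t
    exact_mod_cast this
  refine h.congr_deriv ?_
  simp only [bI, Function.comp, Pi.mul_apply, Pi.add_apply]
  rw [e]
  ring

lemma bF_tendsto (ν : ℂ) (s : ℝ) (hs : 0 < s) :
    Filter.Tendsto (bF ν s) Filter.atTop (nhds 0) := by
  obtain ⟨C, hC⟩ := exp_decay s (1 + ‖ν‖) hs
  have hz : Filter.Tendsto (fun t : ℝ => (s + ‖ν‖) * (C * Real.exp (-t))) Filter.atTop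
      (nhds 0) := by
    have := (Real.tendsto_exp_neg_atTop_nhds_zero.const_mul C).const_mul (s + ‖ν‖)
    simpa using this
  refine squeeze_zero_norm' ?_ hz
  filter_upwards [Filter.eventually_ge_atTop 0] with t ht
  have h1 := norm_cosh_le ν t ht
  have h2 := norm_sinh_le ν t ht
  have h3 : Real.sinh t ≤ Real.exp t := by
    have := cosh_le_exp' t ht
    have := Real.sinh_lt_cosh t
    linarith
  have h4 : 0 ≤ Real.sinh t := Real.sinh_nonneg_iff.mpr ht
  have h5 : Real.exp (‖ν‖ * t) ≤ Real.exp ((1 + ‖ν‖) * t) := by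
    apply Real.exp_le_exp.mpr; linarith
  have h6 : ‖(s * (Real.sinh t : ℂ) * Complex.cosh (ν * (t : ℂ)) + ν * Complex.sinh (ν * (t : ℂ)))‖
      ≤ (s + ‖ν‖) * Real.exp ((1 + ‖ν‖) * t) := by
    refine (norm_add_le _ _).trans ?_
    rw [norm_mul, norm_mul, norm_mul, Complex.norm_real, Complex.norm_real,
      Real.norm_of_nonneg hs.le, Real.norm_of_nonneg h4, add_mul]
    refine add_le_add ?_ ?_
    · rw [add_mul, one_mul, Real.exp_add, ← mul_assoc]
      gcongr
    · gcongr
      exact h2.trans h5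
  rw [bF, norm_mul, norm_E]
  calc _ ≤ Real.exp (-s * Real.cosh t) * ((s + ‖ν‖) * Real.exp ((1 + ‖ν‖) * t)) := by gcongr
    _ = (s + ‖ν‖) * (Real.exp (-s * Real.cosh t) * Real.exp ((1 + ‖ν‖) * t)) := by ring
    _ ≤ _ := by
      have := hC t ht
      gcongr

lemma bessel_ode (ν : ℂ) (s : ℝ) (hs : 0 < s) :
    -(s:ℂ) ^ 2 * bK ν 2 s + s * bK ν 1 s + ((s:ℂ) ^ 2 + ν ^ 2) * bK ν 0 s = 0 := by
  have i2 := (bI_integrable ν 2 s hs).const_mul (-(s:ℂ) ^ 2)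
  have i1 := (bI_integrable ν 1 s hs).const_mul (s:ℂ)
  have i0 := (bI_integrable ν 0 s hs).const_mul ((s:ℂ) ^ 2 + ν ^ 2)
  have h := MeasureTheory.integral_Ioi_of_hasDerivAt_of_tendsto'
    (a := 0) (fun t _ => bF_deriv ν s t) ((i2.add i1).add i0) (bF_tendsto ν s hs)
  have h0 : bF ν s 0 = 0 := by simp [bF]
  rw [h0, sub_zero, MeasureTheory.integral_add (by exact i2.add i1) i0, MeasureTheory.integral_add i2 i1,
    MeasureTheory.integral_const_mul, MeasureTheory.integral_const_mul,
    MeasureTheory.integral_const_mul] at h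
  exact h

lemma besselK_eq (ν : ℂ) (s : ℝ) : besselK ν (s : ℂ) = bK ν 0 s := by
  simp [besselK, bK, bI]

/-- The power prefactor. -/
def gP (ν : ℂ) (x₀ y : ℝ) : ℂ := ((x₀ / y : ℝ) : ℂ) ^ ν

lemma gP_deriv (ν : ℂ) (x₀ y : ℝ) (hx : 0 < x₀) (hy : 0 < y) :
    HasDerivAt (gP ν x₀) (-ν / y * gP ν x₀ y) y := by
  have hq : 0 < x₀ / y := div_pos hx hy
  have h1 : HasDerivAt (fun y : ℝ => x₀ / y) (-x₀ / y ^ 2) y := by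
    have := (hasDerivAt_inv hy.ne').const_mul x₀
    refine (this.congr_deriv ?_)
    field_simp
  have h2 := h1.ofReal_comp
  have hslit : ((x₀ / y : ℝ) : ℂ) ∈ Complex.slitPlane := Or.inl (by rwa [Complex.ofReal_re])
  have h3 := HasDerivAt.comp y
    ((hasDerivAt_id ((x₀ / y : ℝ) : ℂ)).cpow_const (c := ν) hslit) h2
  refine h3.congr_deriv ?_
  have hq' : ((x₀ / y : ℝ) : ℂ) ≠ 0 := by exact_mod_cast hq.ne'
  have hx' : (x₀ : ℂ) ≠ 0 := by exact_mod_cast hx.ne'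
  have hy' : (y : ℂ) ≠ 0 := by exact_mod_cast hy.ne'
  simp only [id]
  rw [Complex.cpow_sub _ _ hq', Complex.cpow_one, gP]
  push_cast
  field_simp

lemma bKs_deriv (ν : ℂ) (n : ℕ) (x₀ y : ℝ) (hx : 0 < x₀) (hy : 0 < y) :
    HasDerivAt (fun y => bK ν n (x₀ * y)) (-(x₀ : ℂ) * bK ν (n + 1) (x₀ * y)) y := by
  have h1 : HasDerivAt (fun y : ℝ => x₀ * y) x₀ y := by
    simpa using (hasDerivAt_id y).const_mul x₀
  have h := (bK_hasDerivAt ν n (x₀ * y) (mul_pos hx hy)).scomp y h1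
  refine h.congr_deriv ?_
  rw [Complex.real_smul]
  ring

lemma phi_deriv (ν : ℂ) (x₀ y : ℝ) (hx : 0 < x₀) (hy : 0 < y) :
    HasDerivAt (phiEF ν x₀)
      (-ν / y * gP ν x₀ y * bK ν 0 (x₀ * y) + gP ν x₀ y * (-(x₀ : ℂ) * bK ν 1 (x₀ * y))) y := by
  have h := (gP_deriv ν x₀ y hx hy).mul (bKs_deriv ν 0 x₀ y hx hy)
  have e : phiEF ν x₀ = gP ν x₀ * fun y => bK ν 0 (x₀ * y) := by
    funext z
    simp only [phiEF, besselK_eq, gP, Pi.mul_apply]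
  rw [e]
  exact h

/-- `φ(y) = (x₀/y)^ν K_ν(x₀ y)` is twice differentiable on `(0,∞)` and
satisfies the Emden–Fowler type equation `φ'' + ((1+2ν)/y) φ' − x₀² φ = 0` there. -/
theorem stmt16 (ν : ℂ) (x₀ : ℝ) (hx₀ : 0 < x₀) :
    ∀ y : ℝ, 0 < y →
      DifferentiableAt ℝ (phiEF ν x₀) y ∧
      DifferentiableAt ℝ (deriv (phiEF ν x₀)) y ∧
      deriv (deriv (phiEF ν x₀)) y + ((1 + 2 * ν) / (y : ℂ)) * deriv (phiEF ν x₀) y -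
          ((x₀ : ℂ)) ^ 2 * phiEF ν x₀ y = 0 := by
  intro y hy
  have hd := phi_deriv ν x₀ y hx₀ hy
  have hy' : (y : ℂ) ≠ 0 := by exact_mod_cast hy.ne'
  have hinv : HasDerivAt (fun y : ℝ => -ν / (y : ℂ)) (ν / (y : ℂ) ^ 2) y := by
    have h := ((hasDerivAt_inv hy').comp_ofReal).const_mul (-ν)
    refine h.congr_deriv ?_
    field_simp
  have h2 := ((hinv.mul (gP_deriv ν x₀ y hx₀ hy)).mul (bKs_deriv ν 0 x₀ y hx₀ hy)).add
    ((gP_deriv ν x₀ y hx₀ hy).mul ((bKs_deriv ν 1 x₀ y hx₀ hy).const_mul (-(x₀ : ℂ))))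
  have h3 := h2.congr_of_eventuallyEq (f₁ := deriv (phiEF ν x₀)) (by
    filter_upwards [Ioi_mem_nhds hy] with z hz
    exact (phi_deriv ν x₀ z hx₀ hz).deriv)
  refine ⟨hd.differentiableAt, h3.differentiableAt, ?_⟩
  rw [h3.deriv, hd.deriv]
  have ho := bessel_ode ν (x₀ * y) (mul_pos hx₀ hy)
  have e : phiEF ν x₀ y = gP ν x₀ y * bK ν 0 (x₀ * y) := by
    simp only [phiEF, besselK_eq, gP]
  rw [e]
  simp only [Pi.mul_apply]
  push_cast at ho
  have ho2 : (0:ℂ) = -(gP ν x₀ y / (y:ℂ) ^ 2) * (-((x₀:ℂ) * y) ^ 2 * bK ν 2 (x₀ * y)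
      + x₀ * y * bK ν 1 (x₀ * y) + (((x₀:ℂ) * y) ^ 2 + ν ^ 2) * bK ν 0 (x₀ * y)) := by
    rw [ho, mul_zero]
  rw [ho2]
  simp only [Nat.reduceAdd]
  field_simp
  ring
end
end
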